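/- arXiv:2305.19368 — 8 statements merged into one kernel-verified Lean document; each statement's English description precedes it below -/
import Mathlib

section
/- Let U be a nonzero finite-dimensional F_q-vector space, g ∈ GL(U), j ∈ {0,…,q−2}, and v, w ∈ U \ {0}. Then v ∼_g w if and only if W_j(g;v) = W_j(g;w); moreover, if v ≁_g w then W_j(g;v) ∩ W_j(g;w) = {0}. -/
/-- The "j-th Weil vector" `u^{(j)} := ∑_{i=0}^{q-2} λ^{-ij} e_{α^i • u}` in the total Weil
module `U →₀ ℂ`. -/
noncomputable def weilVec {Fq U : Type*} [Field Fq] [AddCommGroup U] [Module Fq U]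
    (q : ℕ) (α : Fq) (lam : ℂ) (j : ℕ) (u : U) : U →₀ ℂ :=
  ∑ i ∈ Finset.range (q - 1), (lam ^ (i * j))⁻¹ • Finsupp.single ((α ^ i) • u) (1 : ℂ)

/-- The `g`-cyclic subspace `W_j(g;v)` of the Weil module, the ℂ-span of the vectors
`g^i · v^{(j)}`, `i ≥ 0`. -/
noncomputable def cycSub {Fq U : Type*} [Field Fq] [AddCommGroup U] [Module Fq U]
    (q : ℕ) (α : Fq) (lam : ℂ) (j : ℕ) (g : U ≃ₗ[Fq] U) (v : U) :
    Submodule ℂ (U →₀ ℂ) :=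
  Submodule.span ℂ
    (Set.range fun i : ℕ => ((Finsupp.lmapDomain ℂ ℂ ⇑g) ^ i) (weilVec q α lam j v))

/-!
The vector `u^{(j)}` is the sum of the `e_{β u}`, `β ∈ F_q^×`, twisted by the character with
`χ(α) = λ^j`. Hence `(β u)^{(j)} = χ(β) u^{(j)}`, so that `W_j(g;w) ⊆ W_j(g;v)` whenever
`w = β g^r v`. Conversely, all elements of `W_j(g;v)` are supported on the class of `v`. Since `v`
is periodic under `g`, a power of `g` can be undone by a further power, so the class of `v` is
disjoint from that of every inequivalent `w`, and so are the supports of the two subspaces. They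
are not equal then, as `w^{(j)} ≠ 0` because `F_q^×` acts freely on `U \ {0}`.
-/

section ForwardOrbit

/-- The class `{a • f^r x : a ∈ G, r ≥ 0}` of `x`. For `G = F_q^×` acting by scalars and `f = g`
linear, `w ∈ forwardOrbit G f v` is the relation `v ∼_g w`. -/
def forwardOrbit (G : Type*) {X : Type*} [SMul G X] (f : X → X) (x : X) : Set X :=
  {y | ∃ (a : G) (r : ℕ), y = a • f^[r] x}

variable {G X : Type*} [Group G] [MulAction G X] {f : X → X} {x y z : X}

theorem mem_periodicPts_of_mem_forwardOrbit (hf : ∀ a : G, Function.Commute f (a • ·))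
    (hx : x ∈ Function.periodicPts f) (hy : y ∈ forwardOrbit G f x) :
    y ∈ Function.periodicPts f := by
  obtain ⟨a, r, rfl⟩ := hy
  obtain ⟨n, hn, hnx⟩ := hx
  exact ⟨n, hn, (hnx.apply_iterate r).map (hf a).symm⟩

theorem mem_forwardOrbit_of_mem_of_mem (hf : ∀ a : G, Function.Commute f (a • ·))
    (hinj : Function.Injective f) (hx : x ∈ Function.periodicPts f)
    (hzx : z ∈ forwardOrbit G f x) (hzy : z ∈ forwardOrbit G f y) : y ∈ forwardOrbit G f x := by
  obtain ⟨a, r, rfl⟩ := hzx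
  obtain ⟨b, s, hab⟩ := hzy
  obtain ⟨n, hn, hnx⟩ := hx
  -- By periodicity `r` may be replaced by `r + n * s ≥ s`, and then `f^s` can be cancelled.
  have hle : s ≤ r + n * s := Nat.le_add_left_of_le (Nat.le_mul_of_pos_left s hn)
  obtain ⟨m, hm⟩ := Nat.exists_eq_add_of_le hle
  refine ⟨b⁻¹ * a, m, hinj.iterate s ?_⟩
  calc f^[s] y = (b⁻¹ * a) • f^[r] x := by rw [mul_smul, hab, inv_smul_smul]
    _ = (b⁻¹ * a) • f^[s] (f^[m] x) := by
      rw [← Function.iterate_add_apply, ← hm, Function.iterate_add_apply, hnx.mul_const s]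
    _ = f^[s] ((b⁻¹ * a) • f^[m] x) := ((hf _).iterate_left s _).symm

theorem mem_forwardOrbit_symm (hf : ∀ a : G, Function.Commute f (a • ·))
    (hinj : Function.Injective f) (hx : x ∈ Function.periodicPts f)
    (hy : y ∈ forwardOrbit G f x) : x ∈ forwardOrbit G f y :=
  mem_forwardOrbit_of_mem_of_mem hf hinj (mem_periodicPts_of_mem_forwardOrbit hf hx hy)
    ⟨1, 0, (one_smul G y).symm⟩ hy

theorem disjoint_forwardOrbit (hf : ∀ a : G, Function.Commute f (a • ·))
    (hinj : Function.Injective f) (hx : x ∈ Function.periodicPts f)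
    (hy : y ∉ forwardOrbit G f x) : Disjoint (forwardOrbit G f x) (forwardOrbit G f y) :=
  Set.disjoint_left.2 fun _ hzx hzy => hy (mem_forwardOrbit_of_mem_of_mem hf hinj hx hzx hzy)

end ForwardOrbit

section TwistedOrbitSum

variable {k G X : Type*} [Semiring k] [Group G] [Fintype G] [MulAction G X]

/-- The sum of the translates of `x` twisted by the character `χ`, `∑ a, χ(a)⁻¹ e_{a x}`. The
vector `u^{(j)}` is the case of `F_q^×` acting on `U` by scalars, see
`exists_weilVec_eq_twistedOrbitSum`. -/
noncomputable def twistedOrbitSum (χ : G →* kˣ) (x : X) : X →₀ k :=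
  ∑ a : G, Finsupp.single (a • x) (↑(χ a)⁻¹ : k)

/-- The cyclic submodule generated by `twistedOrbitSum χ x` under the linear extension of `f`: the
analogue of `W_j(g;v)` for a map `f` of a `G`-set. -/
noncomputable def twistedCyclicSpan (χ : G →* kˣ) (f : X → X) (x : X) : Submodule k (X →₀ k) :=
  Submodule.span k
    (Set.range fun i : ℕ => ((Finsupp.lmapDomain k k f) ^ i) (twistedOrbitSum χ x))

variable (χ : G →* kˣ) {f : X → X} {x y : X}

theorem twistedOrbitSum_smul (b : G) (x : X) :
    twistedOrbitSum χ (b • x) = (χ b : k) • twistedOrbitSum χ x := by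
  simp only [twistedOrbitSum, Finset.smul_sum, Finsupp.smul_single, smul_eq_mul]
  refine Fintype.sum_equiv (Equiv.mulRight b) _ _ fun a => ?_
  simp only [Equiv.coe_mulRight, mul_smul, map_mul, mul_inv_rev, Units.val_mul,
    Units.mul_inv_cancel_left]

theorem twistedOrbitSum_ne_zero [Nontrivial k]
    (hx : Function.Injective fun a : G => a • x) : twistedOrbitSum χ x ≠ 0 := by
  classical
  intro hzero
  have smul_eq_iff (a b : G) : a • x = b • x ↔ a = b := hx.eq_iff
  have coeff_one : twistedOrbitSum χ x ((1 : G) • x) = 1 := by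
    simp [twistedOrbitSum, Finsupp.finsetSum_apply, Finsupp.single_apply, smul_eq_iff,
      -one_smul]
  simp [hzero] at coeff_one

theorem lmapDomain_pow_twistedOrbitSum (hf : ∀ a : G, Function.Commute f (a • ·)) (i : ℕ) (x : X) :
    ((Finsupp.lmapDomain k k f) ^ i) (twistedOrbitSum χ x) = twistedOrbitSum χ (f^[i] x) := by
  induction i with
  | zero => rfl
  | succ i ih =>
    rw [pow_succ', Module.End.mul_apply, ih, Function.iterate_succ_apply']
    simp only [twistedOrbitSum, map_sum, Finsupp.lmapDomain_apply, Finsupp.mapDomain_single,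
      (hf _).eq]

theorem twistedOrbitSum_mem_supported (x : X) :
    twistedOrbitSum χ x ∈ Finsupp.supported k k (MulAction.orbit G x) :=
  Submodule.sum_mem _ fun a _ => Finsupp.single_mem_supported k _ (MulAction.mem_orbit x a)

theorem twistedCyclicSpan_le_supported (hf : ∀ a : G, Function.Commute f (a • ·)) (x : X) :
    twistedCyclicSpan χ f x ≤ Finsupp.supported k k (forwardOrbit G f x) := by
  refine Submodule.span_le.2 ?_
  rintro _ ⟨i, rfl⟩
  simp only [SetLike.mem_coe, lmapDomain_pow_twistedOrbitSum χ hf]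
  refine Finsupp.supported_mono ?_ (twistedOrbitSum_mem_supported χ (f^[i] x))
  rintro _ ⟨a, rfl⟩
  exact ⟨a, i, rfl⟩

theorem twistedCyclicSpan_le_of_mem_forwardOrbit (hf : ∀ a : G, Function.Commute f (a • ·))
    (hy : y ∈ forwardOrbit G f x) : twistedCyclicSpan χ f y ≤ twistedCyclicSpan χ f x := by
  obtain ⟨a, r, rfl⟩ := hy
  refine Submodule.span_le.2 ?_
  rintro _ ⟨i, rfl⟩
  simp only [SetLike.mem_coe, twistedOrbitSum_smul, map_smul,
    ← lmapDomain_pow_twistedOrbitSum χ hf, ← Module.End.mul_apply, ← pow_add]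
  exact Submodule.smul_mem _ _ (Submodule.subset_span ⟨i + r, rfl⟩)

theorem disjoint_twistedCyclicSpan (hf : ∀ a : G, Function.Commute f (a • ·))
    (hinj : Function.Injective f) (hx : x ∈ Function.periodicPts f)
    (hy : y ∉ forwardOrbit G f x) :
    Disjoint (twistedCyclicSpan χ f x) (twistedCyclicSpan χ f y) :=
  (Finsupp.disjoint_supported_supported (disjoint_forwardOrbit hf hinj hx hy)).mono
    (twistedCyclicSpan_le_supported χ hf x) (twistedCyclicSpan_le_supported χ hf y)

theorem twistedCyclicSpan_ne_bot [Nontrivial k] (f : X → X)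
    (hx : Function.Injective fun a : G => a • x) : twistedCyclicSpan χ f x ≠ ⊥ :=
  Submodule.ne_bot_iff _ |>.2
    ⟨_, Submodule.subset_span ⟨0, rfl⟩, twistedOrbitSum_ne_zero χ hx⟩

theorem mem_forwardOrbit_iff_twistedCyclicSpan_eq [Nontrivial k]
    (hf : ∀ a : G, Function.Commute f (a • ·)) (hinj : Function.Injective f)
    (hx : x ∈ Function.periodicPts f) (hy : Function.Injective fun a : G => a • y) :
    y ∈ forwardOrbit G f x ↔ twistedCyclicSpan χ f x = twistedCyclicSpan χ f y := by
  refine ⟨fun h => le_antisymm ?_ ?_, fun heq => ?_⟩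
  · exact twistedCyclicSpan_le_of_mem_forwardOrbit χ hf (mem_forwardOrbit_symm hf hinj hx h)
  · exact twistedCyclicSpan_le_of_mem_forwardOrbit χ hf h
  · by_contra hn
    have hdisj := disjoint_twistedCyclicSpan χ hf hinj hx hn
    rw [heq, disjoint_self] at hdisj
    exact twistedCyclicSpan_ne_bot χ f hy hdisj

end TwistedOrbitSum

section WeilModule

-- If `F` has two elements, `hα` also holds for `α = 0`, as `0 ^ 0 = 1`; so `γ` may differ from `α`.
theorem exists_units_generator {F : Type*} [GroupWithZero F] [Fintype F] {α : F}
    (hα : ∀ x : F, x ≠ 0 → ∃ i : ℕ, x = α ^ i) :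
    ∃ γ : Fˣ, (∀ β : Fˣ, β ∈ Subgroup.zpowers γ) ∧
      ∀ i < Fintype.card F - 1, α ^ i = (γ : F) ^ i := by
  classical
  rcases eq_or_ne α 0 with rfl | h0
  · have eq_one (β : Fˣ) : β = 1 := by
      obtain ⟨i, hi⟩ := hα β β.ne_zero
      rcases eq_or_ne i 0 with rfl | hi0
      · exact Units.ext (by simpa using hi)
      · exact absurd (hi.trans (zero_pow hi0)) β.ne_zero
    have card_eq : Fintype.card F - 1 = 1 := by
      rw [← Fintype.card_units, Fintype.card_eq_one_iff]
      exact ⟨1, eq_one⟩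
    refine ⟨1, fun β => (eq_one β).symm ▸ one_mem _, fun i hi => ?_⟩
    rw [card_eq, Nat.lt_one_iff] at hi
    rw [hi, pow_zero, pow_zero]
  · refine ⟨Units.mk0 α h0, fun β => ?_, fun _ _ => rfl⟩
    obtain ⟨i, hi⟩ := hα β β.ne_zero
    exact ⟨i, Units.ext (by simp [hi])⟩

theorem sum_range_card_pow_eq_sum {G M : Type*} [Group G] [Fintype G] [AddCommMonoid M] {γ : G}
    (hγ : ∀ a : G, a ∈ Subgroup.zpowers γ) (φ : G → M) :
    ∑ i ∈ Finset.range (Fintype.card G), φ (γ ^ i) = ∑ a : G, φ a := by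
  classical
  have card_eq : Fintype.card G = orderOf γ := by
    rw [orderOf_eq_card_of_forall_mem_zpowers hγ, Nat.card_eq_fintype_card]
  have hinj : Set.InjOn (γ ^ ·) (Finset.range (Fintype.card G)) := by
    rw [card_eq, Finset.coe_range]
    exact pow_injOn_Iio_orderOf
  rw [← IsCyclic.image_range_card hγ, Nat.card_eq_fintype_card, Finset.sum_image hinj]

theorem mem_forwardOrbit_units_iff {D U : Type*} [DivisionRing D] [AddCommGroup U] [Module D U]
    {g : U ≃ₗ[D] U} {v w : U} :
    w ∈ forwardOrbit Dˣ g v ↔ ∃ (β : D) (r : ℕ), β ≠ 0 ∧ w = β • (g ^ r) v := by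
  simp only [LinearEquiv.pow_apply]
  constructor
  · rintro ⟨β, r, hw⟩
    exact ⟨β, r, β.ne_zero, hw⟩
  · rintro ⟨β, r, hβ, hw⟩
    exact ⟨Units.mk0 β hβ, r, hw⟩

variable {Fq U : Type*} [Field Fq] [Fintype Fq] [DecidableEq Fq] [AddCommGroup U] [Module Fq U]

theorem exists_weilVec_eq_twistedOrbitSum {α : Fq} (hα : ∀ x : Fq, x ≠ 0 → ∃ i : ℕ, x = α ^ i)
    {lam : ℂ} (hlam : lam ^ (Fintype.card Fq - 1) = 1) (j : ℕ) :
    ∃ χ : Fqˣ →* ℂˣ, ∀ u : U, weilVec (Fintype.card Fq) α lam j u = twistedOrbitSum χ u := by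
  obtain ⟨γ, hγ, hpow⟩ := exists_units_generator hα
  obtain ⟨ζ, rfl⟩ : IsUnit lam :=
    IsUnit.of_pow_eq_one hlam (Nat.sub_pos_of_lt Fintype.one_lt_card).ne'
  have hζ : ζ ^ (Fintype.card Fq - 1) = 1 := Units.ext (by simpa using hlam)
  have hdvd : orderOf (ζ ^ j) ∣ orderOf γ := by
    rw [orderOf_eq_card_of_forall_mem_zpowers hγ, Nat.card_eq_fintype_card, Fintype.card_units]
    exact orderOf_dvd_of_pow_eq_one (by rw [pow_right_comm, hζ, one_pow])
  refine ⟨monoidHomOfForallMemZpowers hγ hdvd, fun u => ?_⟩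
  rw [weilVec, twistedOrbitSum, ← sum_range_card_pow_eq_sum hγ, Fintype.card_units]
  refine Finset.sum_congr rfl fun i hi => ?_
  rw [hpow i (Finset.mem_range.1 hi), map_pow, monoidHomOfForallMemZpowers_apply_gen]
  simp [Units.smul_def, pow_mul']

theorem exists_cycSub_eq_twistedCyclicSpan {α : Fq} (hα : ∀ x : Fq, x ≠ 0 → ∃ i : ℕ, x = α ^ i)
    {lam : ℂ} (hlam : lam ^ (Fintype.card Fq - 1) = 1) (j : ℕ) (g : U ≃ₗ[Fq] U) :
    ∃ χ : Fqˣ →* ℂˣ, ∀ u : U, cycSub (Fintype.card Fq) α lam j g u = twistedCyclicSpan χ g u :=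
  (exists_weilVec_eq_twistedOrbitSum hα hlam j).imp fun χ hχ u => by
    rw [cycSub, twistedCyclicSpan, hχ u]

end WeilModule

theorem statement1_general {Fq : Type*} [Field Fq] [Fintype Fq] {q : ℕ}
    (hcard : Fintype.card Fq = q)
    {α : Fq} (hα : ∀ x : Fq, x ≠ 0 → ∃ i : ℕ, x = α ^ i)
    {lam : ℂ} (hlam : lam ^ (q - 1) = 1)
    {U : Type*} [AddCommGroup U] [Module Fq U] (g : U ≃ₗ[Fq] U) (j : ℕ)
    {v w : U} (hv : v ∈ Function.periodicPts g) (hw : w ≠ 0) :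
    ((∃ (β : Fq) (r : ℕ), β ≠ 0 ∧ w = β • (g ^ r) v)
        ↔ cycSub q α lam j g v = cycSub q α lam j g w)
    ∧ (¬ (∃ (β : Fq) (r : ℕ), β ≠ 0 ∧ w = β • (g ^ r) v)
        → cycSub q α lam j g v ⊓ cycSub q α lam j g w = ⊥) := by
  classical
  subst hcard
  obtain ⟨χ, hχ⟩ := exists_cycSub_eq_twistedCyclicSpan hα hlam j g
  have hg (β : Fqˣ) : Function.Commute g (β • ·) := g.map_smul_of_tower β
  have hfree : Function.Injective fun β : Fqˣ => β • w :=
    (smul_left_injective Fq hw).comp Units.val_injective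
  rw [← mem_forwardOrbit_units_iff, hχ v, hχ w]
  exact ⟨mem_forwardOrbit_iff_twistedCyclicSpan_eq χ hg g.injective hv hfree,
    fun h => (disjoint_twistedCyclicSpan χ hg g.injective hv h).eq_bot⟩

theorem statement1 (p q : ℕ) (hp : p.Prime) (κ : ℕ) (hκ : 0 < κ) (hq : q = p ^ κ)
    (Fq : Type*) [Field Fq] [Fintype Fq] (hcard : Fintype.card Fq = q)
    (α : Fq) (hα : ∀ x : Fq, x ≠ 0 → ∃ i : ℕ, x = α ^ i)
    (lam : ℂ) (hlam : IsPrimitiveRoot lam (q - 1))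
    (U : Type*) [AddCommGroup U] [Module Fq U] [Module.Finite Fq U] [Nontrivial U]
    (g : U ≃ₗ[Fq] U) (j : ℕ) (hj : j ≤ q - 2)
    (v w : U) (hv : v ≠ 0) (hw : w ≠ 0) :
    ((∃ (β : Fq) (r : ℕ), β ≠ 0 ∧ w = β • (g ^ r) v)
        ↔ cycSub q α lam j g v = cycSub q α lam j g w)
    ∧ (¬ (∃ (β : Fq) (r : ℕ), β ≠ 0 ∧ w = β • (g ^ r) v)
        → cycSub q α lam j g v ⊓ cycSub q α lam j g w = ⊥) := by
  have : Finite U := Module.finite_of_finite Fq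
  exact statement1_general hcard hα hlam.pow_eq_one g j (g.injective.mem_periodicPts v) hw
end

section
/- Let U be a nonzero finite-dimensional F_q-vector space, g ∈ GL(U) and j ∈ {0,…,q−2}. If S ⊆ U \ {0} contains exactly one representative of each ∼_g-equivalence class, then W_j(U) is the internal direct sum of the subspaces W_j(g;v) for v ∈ S. -/
/-- The submodule `W_j(U)`, the ℂ-span of the vectors `u^{(j)}` for `u ≠ 0`. -/
noncomputable def weilSub (Fq : Type*) {U : Type*} [Field Fq] [AddCommGroup U] [Module Fq U]
    (q : ℕ) (α : Fq) (lam : ℂ) (j : ℕ) : Submodule ℂ (U →₀ ℂ) :=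
  Submodule.span ℂ (weilVec (Fq := Fq) q α lam j '' {u : U | u ≠ 0})

/-!
Multiplying `u` by a nonzero scalar only rescales `u^{(j)}`, so `W_j(g;v)` is the span of the
`u^{(j)}` with `u` in the `∼_g`-class of `v`, and these vectors are supported on that class. Since
the classes of the elements of `S` partition `U \ {0}`, the disjoint supports make the subspaces
independent, and together the classes account for all the generators of `W_j(U)`.
-/

/-- The forward orbit of `v` under `g` and the nonzero scalars. For finite `U` and `v ≠ 0` it is the
`∼_g`-class of `v`; for infinite `U` the relation `u ∈ projOrbit g v` need not be symmetric. -/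
def projOrbit {F U : Type*} [Field F] [AddCommGroup U] [Module F U] (g : U ≃ₗ[F] U) (v : U) :
    Set U :=
  {u | ∃ (β : F) (r : ℕ), β ≠ 0 ∧ u = β • (g ^ r) v}

theorem iSupIndep_supported_of_pairwise_disjoint {ι X R M : Type*} [Semiring R] [AddCommMonoid M]
    [Module R M] {C : ι → Set X} (hC : Pairwise fun i k => Disjoint (C i) (C k)) :
    iSupIndep fun i => Finsupp.supported M R (C i) := by
  refine iSupIndep_def.2 fun i => ?_
  have iSup_le_supported : ⨆ (k) (_ : k ≠ i), Finsupp.supported M R (C k) ≤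
      Finsupp.supported M R (⋃ (k) (_ : k ≠ i), C k) :=
    iSup₂_le fun k hk => Finsupp.supported_mono (Set.subset_iUnion₂ (s := fun k _ => C k) k hk)
  refine Disjoint.mono_right iSup_le_supported (Finsupp.disjoint_supported_supported ?_)
  exact Set.disjoint_iUnion₂_right.2 fun k hk => hC hk.symm

section ProjOrbit

variable {F U : Type*} [Field F] [AddCommGroup U] [Module F U] {g : U ≃ₗ[F] U}

theorem smul_mem_projOrbit {v u : U} {β : F} (hβ : β ≠ 0) (hu : u ∈ projOrbit g v) :
    β • u ∈ projOrbit g v := by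
  obtain ⟨γ, r, hγ, rfl⟩ := hu
  exact ⟨β * γ, r, mul_ne_zero hβ hγ, smul_smul β γ _⟩

theorem ne_zero_of_mem_projOrbit {v u : U} (hv : v ≠ 0) (hu : u ∈ projOrbit g v) : u ≠ 0 := by
  obtain ⟨β, r, hβ, rfl⟩ := hu
  exact smul_ne_zero hβ ((LinearEquiv.map_ne_zero_iff (g ^ r)).2 hv)

theorem pairwise_disjoint_projOrbit {S : Set U} (hS0 : ∀ v ∈ S, v ≠ 0)
    (hS : ∀ u : U, u ≠ 0 → {w | w ∈ S ∧ u ∈ projOrbit g w}.Subsingleton) :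
    Pairwise fun v w : S => Disjoint (projOrbit g (v : U)) (projOrbit g (w : U)) := by
  refine fun v w hvw => Set.disjoint_left.2 fun u hv hw => hvw (Subtype.ext ?_)
  exact hS u (ne_zero_of_mem_projOrbit (hS0 v v.2) hv) ⟨v.2, hv⟩ ⟨w.2, hw⟩

theorem iUnion_projOrbit_eq {S : Set U} (hS0 : ∀ v ∈ S, v ≠ 0)
    (hS : ∀ u : U, u ≠ 0 → ∃ w ∈ S, u ∈ projOrbit g w) :
    (⋃ v : S, projOrbit g (v : U)) = {u : U | u ≠ 0} := by
  refine Set.Subset.antisymm (Set.iUnion_subset fun v _ => ne_zero_of_mem_projOrbit (hS0 v v.2)) ?_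
  intro u hu
  obtain ⟨w, hw, huw⟩ := hS u hu
  exact Set.mem_iUnion.2 ⟨⟨w, hw⟩, huw⟩

end ProjOrbit

section WeilVec

variable {F U : Type*} [Field F] [AddCommGroup U] [Module F U]
variable {q : ℕ} {α : F} {lam : ℂ} {j : ℕ}

theorem lmapDomain_weilVec {V G : Type*} [AddCommGroup V] [Module F V] [FunLike G U V]
    [MulActionHomClass G F U V] (f : G) (u : U) :
    Finsupp.lmapDomain ℂ ℂ f (weilVec q α lam j u) = weilVec q α lam j (f u) := by
  simp only [weilVec, map_sum, map_smul, Finsupp.lmapDomain_apply, Finsupp.mapDomain_single]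

theorem lmapDomain_pow_weilVec (g : U ≃ₗ[F] U) (r : ℕ) (u : U) :
    (Finsupp.lmapDomain ℂ ℂ g ^ r) (weilVec q α lam j u) = weilVec q α lam j ((g ^ r) u) := by
  induction r with
  | zero => rfl
  | succ r ih =>
    rw [pow_succ', Module.End.mul_apply, ih, lmapDomain_weilVec, pow_succ', LinearEquiv.mul_apply]

theorem weilVec_smul_base (hα : α ^ (q - 1) = 1) (hlam : lam ^ (q - 1) = 1) (u : U) :
    weilVec q α lam j (α • u) = lam ^ j • weilVec q α lam j u := by
  let summand (i : ℕ) : U →₀ ℂ := (lam ^ (i * j))⁻¹ • Finsupp.single (α ^ i • u) 1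
  have summand_period : summand (q - 1) = summand 0 := by
    simp only [summand, pow_mul, hα, hlam, one_pow, pow_zero]
  have summand_succ (i : ℕ) (hlam0 : lam ≠ 0) :
      (lam ^ (i * j))⁻¹ • Finsupp.single (α ^ i • α • u) (1 : ℂ) = lam ^ j • summand (i + 1) := by
    rw [smul_smul, smul_smul, ← pow_succ, add_one_mul, pow_add lam, mul_inv_rev,
      mul_inv_cancel_left₀ (pow_ne_zero j hlam0)]
  have cyclic_shift :
      ∑ i ∈ Finset.range (q - 1), summand (i + 1) = ∑ i ∈ Finset.range (q - 1), summand i := by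
    have h := Finset.sum_range_succ' summand (q - 1)
    rw [Finset.sum_range_succ, summand_period] at h
    exact (add_right_cancel h).symm
  calc weilVec q α lam j (α • u)
      = ∑ i ∈ Finset.range (q - 1), lam ^ j • summand (i + 1) :=
        Finset.sum_congr rfl fun i hi =>
          summand_succ i (IsUnit.of_pow_eq_one hlam (by have := Finset.mem_range.1 hi; lia)).ne_zero
    _ = lam ^ j • weilVec q α lam j u := by rw [← Finset.smul_sum, cyclic_shift]; rfl

theorem weilVec_pow_smul (hα : α ^ (q - 1) = 1) (hlam : lam ^ (q - 1) = 1) (k : ℕ) (u : U) :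
    weilVec q α lam j (α ^ k • u) = (lam ^ j) ^ k • weilVec q α lam j u := by
  induction k with
  | zero => simp only [pow_zero, one_smul]
  | succ k ih =>
    rw [pow_succ', mul_smul, weilVec_smul_base hα hlam, ih, smul_smul, ← pow_succ']

end WeilVec

section Generator

variable {F U : Type*} [Field F] [Fintype F] [AddCommGroup U] [Module F U]
variable {α : F} {lam : ℂ} {j : ℕ}

-- When `F` has two elements, `α` may be `0`, because `0 ^ 0 = 1`.
theorem pow_ne_zero_of_lt_card_sub_one (hα : ∀ x : F, x ≠ 0 → ∃ i : ℕ, x = α ^ i) {i : ℕ}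
    (hi : i < Fintype.card F - 1) : α ^ i ≠ 0 := by
  classical
  intro h
  obtain ⟨rfl, hi0⟩ := pow_eq_zero_iff'.1 h
  have unit_eq_one (x : Fˣ) : x = 1 := by
    obtain ⟨k, hk⟩ := hα x x.ne_zero
    have hk0 : k = 0 := by_contra fun hk0 => x.ne_zero (hk.trans (zero_pow hk0))
    exact Units.ext (by rw [hk, hk0, pow_zero, Units.val_one])
  have card_units_le : Fintype.card Fˣ ≤ 1 :=
    Fintype.card_le_one_iff.2 fun x y => (unit_eq_one x).trans (unit_eq_one y).symm
  rw [Fintype.card_units] at card_units_le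
  lia

theorem exists_weilVec_smul_eq_smul (hα : ∀ x : F, x ≠ 0 → ∃ i : ℕ, x = α ^ i)
    (hlam : lam ^ (Fintype.card F - 1) = 1) {β : F} (hβ : β ≠ 0) (u : U) :
    ∃ c : ℂ, weilVec (Fintype.card F) α lam j (β • u) =
      c • weilVec (Fintype.card F) α lam j u := by
  obtain ⟨k, rfl⟩ := hα β hβ
  obtain rfl | hk := eq_or_ne k 0
  · exact ⟨1, by rw [pow_zero, one_smul, one_smul]⟩
  · have hα1 := FiniteField.pow_card_sub_one_eq_one α ((pow_ne_zero_iff hk).1 hβ)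
    exact ⟨_, weilVec_pow_smul hα1 hlam k u⟩

theorem cycSub_eq_span_image_projOrbit (hα : ∀ x : F, x ≠ 0 → ∃ i : ℕ, x = α ^ i)
    (hlam : lam ^ (Fintype.card F - 1) = 1) (g : U ≃ₗ[F] U) (v : U) :
    cycSub (Fintype.card F) α lam j g v =
      Submodule.span ℂ (weilVec (Fintype.card F) α lam j '' projOrbit g v) := by
  simp only [cycSub, lmapDomain_pow_weilVec]
  apply le_antisymm <;> rw [Submodule.span_le]
  · rintro _ ⟨r, rfl⟩
    exact Submodule.subset_span ⟨_, ⟨1, r, one_ne_zero, (one_smul F _).symm⟩, rfl⟩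
  · rintro _ ⟨_, ⟨β, r, hβ, rfl⟩, rfl⟩
    obtain ⟨c, hc⟩ := exists_weilVec_smul_eq_smul (j := j) hα hlam hβ ((g ^ r) v)
    rw [hc]
    exact Submodule.smul_mem _ c (Submodule.subset_span ⟨r, rfl⟩)

theorem span_image_weilVec_le_supported (hα : ∀ x : F, x ≠ 0 → ∃ i : ℕ, x = α ^ i) {C : Set U}
    (hC : ∀ β : F, β ≠ 0 → ∀ u ∈ C, β • u ∈ C) :
    Submodule.span ℂ (weilVec (Fintype.card F) α lam j '' C) ≤ Finsupp.supported ℂ ℂ C := by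
  refine Submodule.span_le.2 ?_
  rintro _ ⟨u, hu, rfl⟩
  refine Submodule.sum_mem _ fun i hi => Submodule.smul_mem _ _ ?_
  have hαi := pow_ne_zero_of_lt_card_sub_one hα (Finset.mem_range.1 hi)
  exact Finsupp.single_mem_supported ℂ _ (hC _ hαi u hu)

theorem statement2_general (hα : ∀ x : F, x ≠ 0 → ∃ i : ℕ, x = α ^ i)
    (hlam : lam ^ (Fintype.card F - 1) = 1) (g : U ≃ₗ[F] U) {S : Set U}
    (hS0 : ∀ v ∈ S, v ≠ 0)
    (hS : ∀ u : U, u ≠ 0 → ∃! w, w ∈ S ∧ u ∈ projOrbit g w) :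
    iSupIndep (fun v : S => cycSub (Fintype.card F) α lam j g (v : U)) ∧
      (⨆ v : S, cycSub (Fintype.card F) α lam j g (v : U)) =
        weilSub F (Fintype.card F) α lam j := by
  simp only [cycSub_eq_span_image_projOrbit hα hlam]
  constructor
  · have orbits_disjoint := pairwise_disjoint_projOrbit hS0 fun u hu _ hv _ hw =>
      (hS u hu).unique hv hw
    exact (iSupIndep_supported_of_pairwise_disjoint orbits_disjoint).mono fun v =>
      span_image_weilVec_le_supported hα fun _ hβ _ => smul_mem_projOrbit hβ
  · have orbits_cover := iUnion_projOrbit_eq hS0 fun u hu => (hS u hu).exists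
    rw [← Submodule.span_iUnion, ← Set.image_iUnion, orbits_cover, weilSub]

end Generator

theorem statement2 (p q : ℕ) (hp : p.Prime) (κ : ℕ) (hκ : 0 < κ) (hq : q = p ^ κ)
    (Fq : Type*) [Field Fq] [Fintype Fq] (hcard : Fintype.card Fq = q)
    (α : Fq) (hα : ∀ x : Fq, x ≠ 0 → ∃ i : ℕ, x = α ^ i)
    (lam : ℂ) (hlam : IsPrimitiveRoot lam (q - 1))
    (U : Type*) [AddCommGroup U] [Module Fq U] [Module.Finite Fq U] [Nontrivial U]
    (g : U ≃ₗ[Fq] U) (j : ℕ) (hj : j ≤ q - 2)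
    (S : Set U) (hS0 : ∀ v ∈ S, v ≠ 0)
    (hS : ∀ u : U, u ≠ 0 →
      ∃! w, w ∈ S ∧ ∃ (β : Fq) (r : ℕ), β ≠ 0 ∧ u = β • (g ^ r) w) :
    iSupIndep (fun v : S => cycSub q α lam j g (v : U))
    ∧ (⨆ v : S, cycSub q α lam j g (v : U)) = weilSub Fq q α lam j := by
  subst hcard
  exact statement2_general hα hlam.pow_eq_one g hS0 hS
end

section
/- Let ψ₀ be a nontrivial additive character of F_p and set ψ := ψ₀ ∘ Tr_{K/F_p}. Assume bC − cB = 1. Then for every u ∈ K^×: ∑_{x ∈ K} ∑_{z ∈ K} ∑_{y ∈ K^×} ∑_{t ∈ K^×} ψ( −t·u^{−1}·x^A·y^{−B} + t·z^C + x − y − z ) = (#K)² · ( −1 + #{ v ∈ K^× : u^{−b}·v^B + u^{c·q^m}·v^{−C·q^m} = 1 } ). -/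
/-- An additive character of `A` with values in `ℂ`. -/
def IsAddCharFn {A : Type*} [AddGroup A] (φ : A → ℂ) : Prop :=
  φ 0 = 1 ∧ ∀ a b : A, φ (a + b) = φ a * φ b

/-!
Summing over `t ≠ 0` restricts the remaining sum to the hypersurface `y ^ B * z ^ C = u⁻¹ * x ^ A`,
up to a multiple of `∑ x, ψ x = 0`. Above `x = 0` it consists of the points with `z = 0`, which
contribute `-1`. Above `x ≠ 0`, the relation `A = B + C * Q` makes the equation weighted
homogeneous: the substitution `y = x * Y`, `z = x ^ Q * Z` turns it into
`Y ^ B * Z ^ C = u⁻¹`, a curve which `b * C - c * B = 1` lets one parametrise by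
`Y = u ^ c * v ^ (-C)`, `Z = u ^ (-b) * v ^ B`. When `ψ (a ^ Q) = ψ a` for all `a`, the character
takes on this point the value `ψ (x ^ Q * (1 - (Z + Y ^ Q)))`, and as `x ↦ x ^ Q` permutes `Kˣ`,
the sum over `x` detects those `v` with `Z + Y ^ Q = 1`.
-/

open AddChar

theorem zpow_mul_zpow_zpow_mul_zpow {G : Type*} [CommGroup G] (x y : G) (a b c d k l : ℤ) :
    (x ^ a * y ^ b) ^ k * (x ^ c * y ^ d) ^ l = x ^ (a * k + c * l) * y ^ (b * k + d * l) := by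
  rw [mul_zpow, mul_zpow, mul_mul_mul_comm]
  simp only [zpow_add, zpow_mul]

/-- The change of coordinates `(x, y) ↦ (x ^ a * y ^ b, x ^ c * y ^ d)` of a commutative group
attached to an integer matrix of determinant one; its inverse is attached to the inverse matrix.
It straightens the curves `x ^ a * y ^ b = g`. -/
def monomialEquiv (G : Type*) [CommGroup G] {a b c d : ℤ} (h : a * d - b * c = 1) :
    G × G ≃ G × G where
  toFun P := (P.1 ^ a * P.2 ^ b, P.1 ^ c * P.2 ^ d)
  invFun P := (P.1 ^ d * P.2 ^ (-b), P.1 ^ (-c) * P.2 ^ a)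
  left_inv := by
    rintro ⟨x, y⟩
    simp only [zpow_mul_zpow_zpow_mul_zpow]
    rw [show a * d + c * -b = 1 by linarith, show b * d + d * -b = 0 by ring,
      show a * -c + c * a = 0 by ring, show b * -c + d * a = 1 by linarith]
    simp only [zpow_one, zpow_zero, mul_one, one_mul]
  right_inv := by
    rintro ⟨x, y⟩
    simp only [zpow_mul_zpow_zpow_mul_zpow]
    rw [show d * a + -c * b = 1 by linarith, show -b * a + a * b = 0 by ring,
      show d * c + -c * d = 0 by ring, show -b * c + a * d = 1 by linarith]
    simp only [zpow_one, zpow_zero, mul_one, one_mul]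

theorem sum_sum_ite_zpow_mul_zpow_eq {G M : Type*} [CommGroup G] [Fintype G] [DecidableEq G]
    [AddCommMonoid M] {a b c d : ℤ} (h : a * d - b * c = 1) (g : G) (F : G → G → M) :
    ∑ x, ∑ y, (if x ^ a * y ^ b = g then F x y else 0) =
      ∑ v, F (g ^ d * v ^ (-b)) (g ^ (-c) * v ^ a) := by
  rw [← Fintype.sum_prod_type' (f := fun x y ↦ if x ^ a * y ^ b = g then F x y else 0),
    ← (monomialEquiv G h).symm.sum_comp, Fintype.sum_prod_type_right]
  refine Finset.sum_congr rfl fun v _ ↦ ?_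
  have fst_eq (r : G) :
      ((monomialEquiv G h).symm (r, v)).1 ^ a * ((monomialEquiv G h).symm (r, v)).2 ^ b = r :=
    congrArg Prod.fst ((monomialEquiv G h).apply_symm_apply (r, v))
  simp only [fst_eq, Finset.sum_ite_eq', Finset.mem_univ, if_true]
  rfl

theorem sum_eq_apply_zero_add_sum_units {G₀ M : Type*} [GroupWithZero G₀] [Fintype G₀]
    [DecidableEq G₀] [AddCommMonoid M] (f : G₀ → M) :
    ∑ x, f x = f 0 + ∑ x : G₀ˣ, f x := by
  rw [Fintype.sum_eq_add_sum_subtype_ne f 0]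
  exact congrArg _ (unitsEquivNeZero.sum_comp fun x : {a : G₀ // a ≠ 0} ↦ f x).symm

theorem pow_sub_one_div_sub_one_eq_add {q m n : ℕ} (hq : 2 ≤ q) (hmn : m ≤ n) :
    (q ^ n - 1) / (q - 1) =
      (q ^ m - 1) / (q - 1) + (q ^ (n - m) - 1) / (q - 1) * q ^ m := by
  obtain ⟨k, rfl⟩ := Nat.exists_eq_add_of_le hmn
  simp only [← Nat.geomSum_eq hq, Nat.add_sub_cancel_left]
  rw [Finset.sum_range_add]
  simp only [Finset.sum_mul, pow_add, mul_comm]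

theorem pow_sub_one_div_sub_one_ne_zero {q n : ℕ} (hq : 2 ≤ q) (hn : n ≠ 0) :
    (q ^ n - 1) / (q - 1) ≠ 0 :=
  Nat.div_ne_zero_iff.2 ⟨by omega, Nat.sub_le_sub_right (Nat.le_self_pow hn q) 1⟩

theorem trace_pow_card_pow {F L : Type*} [Field F] [Fintype F] [Field L] [Algebra F L]
    [Algebra.IsAlgebraic F L] (k : ℕ) (a : L) :
    Algebra.trace F L (a ^ Fintype.card F ^ k) = Algebra.trace F L a := by
  rw [← Algebra.trace_eq_of_algEquiv (FiniteField.frobeniusAlgEquivOfAlgebraic F L ^ k) a,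
    AlgEquiv.coe_pow, FiniteField.coe_frobeniusAlgEquivOfAlgebraic_iterate]

theorem addChar_comp_trace_ne_one {F L M : Type*} [Field F] [Field L] [Algebra F L]
    [FiniteDimensional F L] [Algebra.IsSeparable F L] [Monoid M] {φ : AddChar F M} (hφ : φ ≠ 1) :
    φ.compAddMonoidHom (Algebra.trace F L).toAddMonoidHom ≠ 1 := fun h ↦
  hφ <| compAddMonoidHom_injective_left _ (Algebra.trace_surjective F L) h

namespace IsAddCharFn

/-- The bundled form of an additive character given as a plain function, through which Mathlib's
theory of `AddChar` applies. -/
def toAddChar {A : Type*} [AddGroup A] {φ : A → ℂ} (hφ : IsAddCharFn φ) : AddChar A ℂ where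
  toFun := φ
  map_zero_eq_one' := hφ.1
  map_add_eq_mul' := hφ.2

theorem toAddChar_ne_one {A : Type*} [AddGroup A] {φ : A → ℂ} (hφ : IsAddCharFn φ)
    (h : ∃ a, φ a ≠ 1) : hφ.toAddChar ≠ 1 :=
  ne_one_iff.2 h

end IsAddCharFn

section PowInvariant

variable {K R : Type*} [Ring K] [Monoid R] {ψ : AddChar K R} {Q : ℕ}

theorem ne_zero_of_addChar_pow_invariant (hψ : ψ ≠ 1) (hQ : ∀ a, ψ (a ^ Q) = ψ a) : Q ≠ 0 := by
  rintro rfl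
  obtain ⟨a, ha⟩ := ne_one_iff.1 hψ
  exact ha <| by rw [← hQ a, pow_zero, ← pow_zero (0 : K), hQ, map_zero_eq_one]

theorem addChar_pow_sub_pow (hQ : ∀ a, ψ (a ^ Q) = ψ a) (x y : K) :
    ψ (x ^ Q - y ^ Q) = ψ (x - y) := by
  refine (ψ.val_isUnit y).mul_right_cancel ?_
  calc ψ (x ^ Q - y ^ Q) * ψ y = ψ (x ^ Q - y ^ Q + y ^ Q) := by rw [map_add_eq_mul, hQ y]
    _ = ψ (x - y + y) := by rw [sub_add_cancel, sub_add_cancel, hQ]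
    _ = ψ (x - y) * ψ y := map_add_eq_mul ψ _ _

end PowInvariant

theorem units_pow_injective_of_addChar_pow_invariant {K R : Type*} [Field K] [CommMonoid R]
    {ψ : AddChar K R} {Q : ℕ} (hψ : ψ ≠ 1) (hQ : ∀ a, ψ (a ^ Q) = ψ a) :
    Function.Injective fun x : Kˣ ↦ x ^ Q := by
  refine (injective_iff_map_eq_one (powMonoidHom Q : Kˣ →* Kˣ)).2 fun w (hw : w ^ Q = 1) ↦ ?_
  have shift_eq : mulShift ψ w = mulShift ψ 1 := by
    ext a
    rw [mulShift_apply, mulShift_apply, one_mul, ← hQ, mul_pow, ← Units.val_pow_eq_pow_val, hw,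
      Units.val_one, one_mul, hQ]
  exact Units.ext (to_mulShift_inj_of_isPrimitive (IsPrimitive.of_ne_one hψ) shift_eq)

section UnitSums

variable {K R : Type*} [Field K] [Fintype K] [DecidableEq K] [CommRing R] [IsDomain R]
  {ψ : AddChar K R}

theorem sum_units_addChar_mul (hψ : ψ ≠ 1) (s : K) :
    ∑ t : Kˣ, ψ (t * s) = (if s = 0 then (Fintype.card K : R) else 0) - 1 := by
  have sum_mul := sum_mulShift s (IsPrimitive.of_ne_one hψ)
  rw [sum_eq_apply_zero_add_sum_units, zero_mul, map_zero_eq_one] at sum_mul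
  rw [eq_sub_iff_add_eq', sum_mul]
  push_cast
  rfl

theorem sum_sum_units_addChar_mul_add {ι : Type*} [Fintype ι] (hψ : ψ ≠ 1) (f g : ι → K)
    (hg : ∑ i, ψ (g i) = 0) :
    ∑ i, ∑ t : Kˣ, ψ (t * f i + g i) =
      Fintype.card K * ∑ i, if f i = 0 then ψ (g i) else 0 := by
  simp only [map_add_eq_mul, ← Finset.sum_mul, sum_units_addChar_mul hψ, sub_mul, one_mul,
    Finset.sum_sub_distrib, hg, sub_zero, Finset.mul_sum, ite_mul, mul_ite, zero_mul, mul_zero]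

theorem sum_units_addChar_pow_mul (hψ : ψ ≠ 1) {Q : ℕ} (hQ : ∀ a, ψ (a ^ Q) = ψ a) (s : K) :
    ∑ x : Kˣ, ψ (x ^ Q * s) = (if s = 0 then (Fintype.card K : R) else 0) - 1 := by
  have bij := Finite.injective_iff_bijective.1 (units_pow_injective_of_addChar_pow_invariant hψ hQ)
  rw [← sum_units_addChar_mul hψ s, ← bij.sum_comp fun t : Kˣ ↦ ψ (t * s)]
  simp only [Units.val_pow_eq_pow_val]

theorem sum_sum_units_addChar_pow_mul_one_sub {ι : Type*} [Fintype ι] (hψ : ψ ≠ 1) {Q : ℕ}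
    (hQ : ∀ a, ψ (a ^ Q) = ψ a) (f : ι → K) :
    ∑ i, ∑ x : Kˣ, ψ (x ^ Q * (1 - f i)) =
      Fintype.card K * Nat.card {i | f i = 1} - Fintype.card ι := by
  simp only [sum_units_addChar_pow_mul hψ hQ, sub_eq_zero, eq_comm (a := (1 : K)),
    Finset.sum_sub_distrib, ← Finset.sum_filter, Finset.sum_const, Finset.card_univ, nsmul_eq_mul,
    mul_one, Set.coe_ofPred, Nat.card_eq_fintype_card, Fintype.card_subtype]
  rw [mul_comm]

end UnitSums

/-- The sum of `ψ (x - y - z)` over the points `(y, z)`, `y ≠ 0`, of the fibre above `x` of the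
hypersurface `y ^ B * z ^ C = s * x ^ A`: what is left of the sums over `y`, `z` and `t` in the
theorem once the sum over `t` has been evaluated. -/
def fiberSum {K R : Type*} [Field K] [Fintype K] [DecidableEq K] [CommSemiring R]
    (ψ : AddChar K R) (A B C : ℕ) (s x : K) : R :=
  ∑ z : K, ∑ y : Kˣ, if (y : K) ^ B * z ^ C = s * x ^ A then ψ (x - y - z) else 0

section FiberOverUnit

variable {K R : Type*} [Field K] [Fintype K] [DecidableEq K] [CommSemiring R] {ψ : AddChar K R}
  {A B C Q : ℕ}

theorem fiberSum_unit_eq_sum_units (hQ : ∀ a, ψ (a ^ Q) = ψ a) (hC : C ≠ 0) (hA : A = B + C * Q)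
    (s x : Kˣ) :
    fiberSum ψ A B C (s : K) x =
      ∑ y : Kˣ, ∑ z : Kˣ, if y ^ B * z ^ C = s then ψ (x ^ Q * (1 - (z + y ^ Q))) else 0 := by
  have no_zero : ∑ y : Kˣ,
      (if (y : K) ^ B * 0 ^ C = s * (x : K) ^ A then ψ (x - y - 0) else 0) = 0 := by
    simp [zero_pow hC, eq_comm]
  rw [fiberSum, sum_eq_apply_zero_add_sum_units, no_zero, zero_add, Finset.sum_comm,
    ← Equiv.sum_comp (Equiv.mulRight x)]
  refine Finset.sum_congr rfl fun y _ ↦ ?_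
  rw [← Equiv.sum_comp (Equiv.mulRight (x ^ Q))]
  refine Finset.sum_congr rfl fun z _ ↦ ?_
  simp only [Equiv.coe_mulRight]
  have scaled_eq : (y * x) ^ B * (z * x ^ Q) ^ C = y ^ B * z ^ C * x ^ A := by
    rw [hA, pow_add, mul_comm C, pow_mul, mul_pow, mul_pow, mul_mul_mul_comm]
  have fiber_iff : ((y * x : Kˣ) : K) ^ B * ((z * x ^ Q : Kˣ) : K) ^ C = s * (x : K) ^ A ↔
      y ^ B * z ^ C = s := by
    rw [← mul_left_inj (x ^ A), ← scaled_eq]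
    norm_cast
  have value_eq : ψ (x - (y * x : Kˣ) - (z * x ^ Q : Kˣ)) = ψ (x ^ Q * (1 - (z + y ^ Q))) := by
    calc ψ (x - (y * x : Kˣ) - (z * x ^ Q : Kˣ))
        = ψ (x - y * x) * ψ (-(z * x ^ Q)) := by
          rw [← map_add_eq_mul, sub_eq_add_neg _ (_ : K)]
          push_cast
          rfl
      _ = ψ (x ^ Q - (y * x) ^ Q) * ψ (-(z * x ^ Q)) := by rw [addChar_pow_sub_pow hQ]
      _ = ψ (x ^ Q * (1 - (z + y ^ Q))) := by rw [← map_add_eq_mul]; ring_nf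
  simp only [fiber_iff, value_eq]

theorem fiberSum_unit (hQ : ∀ a, ψ (a ^ Q) = ψ a) (hC : C ≠ 0)
    (hA : A = B + C * Q) {b c : ℤ} (hbc : b * C - c * B = 1) (u x : Kˣ) :
    fiberSum ψ A B C (u : K)⁻¹ x =
      ∑ v : Kˣ, ψ (x ^ Q * (1 - ((u : K) ^ (-b) * (v : K) ^ (B : ℤ) +
        (u : K) ^ (c * (Q : ℤ)) * (v : K) ^ (-((C * Q : ℕ) : ℤ))))) := by
  have hdet : (B : ℤ) * -c - C * -b = 1 := by linarith
  rw [← Units.val_inv_eq_inv_val, fiberSum_unit_eq_sum_units hQ hC hA]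
  simp only [← zpow_natCast (_ : Kˣ)]
  rw [sum_sum_ite_zpow_mul_zpow_eq hdet]
  refine Finset.sum_congr rfl fun v _ ↦ ?_
  simp [zpow_mul, mul_pow]

end FiberOverUnit

section FiberSums

variable {K R : Type*} [Field K] [Fintype K] [DecidableEq K] [CommRing R] [IsDomain R]
  {ψ : AddChar K R} {A B C : ℕ}

theorem fiberSum_zero (hψ : ψ ≠ 1) (hA : A ≠ 0) (hC : C ≠ 0) (s : K) :
    fiberSum ψ A B C s 0 = -1 := by
  have sum_neg : ∑ y : Kˣ, ψ (-y) = -1 := by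
    simpa using sum_units_addChar_mul hψ (-1)
  simp [fiberSum, zero_pow hA, hC, sum_neg, sub_eq_add_neg]

theorem sum_fiberSum (hψ : ψ ≠ 1) {Q : ℕ} (hQ : ∀ a, ψ (a ^ Q) = ψ a) (hC : C ≠ 0)
    (hA : A = B + C * Q) {b c : ℤ} (hbc : b * C - c * B = 1) (u : Kˣ) :
    ∑ x : K, fiberSum ψ A B C (u : K)⁻¹ x =
      Fintype.card K * (-1 + Nat.card {v : Kˣ | (u : K) ^ (-b) * (v : K) ^ (B : ℤ) +
        (u : K) ^ (c * (Q : ℤ)) * (v : K) ^ (-((C * Q : ℕ) : ℤ)) = 1}) := by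
  have A_ne_zero : A ≠ 0 := by
    have := ne_zero_of_addChar_pow_invariant hψ hQ
    rw [hA]; positivity
  rw [sum_eq_apply_zero_add_sum_units, fiberSum_zero hψ A_ne_zero hC]
  simp only [fiberSum_unit hQ hC hA hbc]
  rw [Finset.sum_comm, sum_sum_units_addChar_pow_mul_one_sub hψ hQ, Fintype.card_units,
    Nat.cast_pred Fintype.card_pos]
  ring

theorem sum_units_addChar_eq_card_mul_sum_fiberSum (hψ : ψ ≠ 1) (s : K) :
    ∑ x : K, ∑ z : K, ∑ y : Kˣ, ∑ t : Kˣ,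
        ψ (t * (z ^ C - s * x ^ A * ((y : K) ^ B)⁻¹) + (x - y - z)) =
      Fintype.card K * ∑ x, fiberSum ψ A B C s x := by
  have condition_iff (x z : K) (y : Kˣ) :
      z ^ C - s * x ^ A * ((y : K) ^ B)⁻¹ = 0 ↔ (y : K) ^ B * z ^ C = s * x ^ A := by
    rw [sub_eq_zero, ← div_eq_mul_inv, eq_div_iff (pow_ne_zero _ y.ne_zero), mul_comm]
  have phase_sum : ∑ P : K × K × Kˣ, ψ (P.1 - P.2.2 - P.2.1) = 0 := by
    simp [Fintype.sum_prod_type_right, sub_eq_add_neg, map_add_eq_mul, ← Finset.sum_mul,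
      sum_eq_zero_of_ne_one hψ]
  have detected := sum_sum_units_addChar_mul_add hψ
    (fun P : K × K × Kˣ ↦ P.2.1 ^ C - s * P.1 ^ A * ((P.2.2 : K) ^ B)⁻¹) _ phase_sum
  simpa only [fiberSum, Fintype.sum_prod_type, condition_iff] using detected

end FiberSums

theorem statement8_general {K R : Type*} [Field K] [Fintype K] [DecidableEq K] [CommRing R]
    [IsDomain R] {ψ : AddChar K R} (hψ : ψ ≠ 1) {A B C Q : ℕ} (hQ : ∀ a, ψ (a ^ Q) = ψ a)
    (hC : C ≠ 0) (hA : A = B + C * Q) {b c : ℤ} (hbc : b * C - c * B = 1) {u : K} (hu : u ≠ 0) :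
    ∑ x : K, ∑ z : K, ∑ y : Kˣ, ∑ t : Kˣ,
        ψ (-(t : K) * u⁻¹ * x ^ A * ((y : K) ^ B)⁻¹ + (t : K) * z ^ C + x - (y : K) - z) =
      (Fintype.card K : R) ^ 2 *
        (-1 + (Nat.card {v : Kˣ |
          u ^ (-b) * (v : K) ^ (B : ℤ) +
            u ^ (c * (Q : ℤ)) * (v : K) ^ (-((C * Q : ℕ) : ℤ)) = 1} : R)) := by
  lift u to Kˣ using hu.isUnit
  have phase_eq (x z : K) (y t : Kˣ) :
      -(t : K) * (u : K)⁻¹ * x ^ A * ((y : K) ^ B)⁻¹ + t * z ^ C + x - y - z =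
        t * (z ^ C - (u : K)⁻¹ * x ^ A * ((y : K) ^ B)⁻¹) + (x - y - z) := by
    ring
  simp only [phase_eq]
  rw [sum_units_addChar_eq_card_mul_sum_fiberSum hψ, sum_fiberSum hψ hQ hC hA hbc, ← mul_assoc,
    ← sq]

theorem statement8 (p q n m : ℕ) (hp : p.Prime) (κ : ℕ) (hκ : 0 < κ) (hq : q = p ^ κ)
    (hm : 1 ≤ m) (hmn : m < n)
    (Fq : Type*) [Field Fq] [Fintype Fq] (hcard : Fintype.card Fq = q)
    (K : Type*) [Field K] [Fintype K] [DecidableEq K] [Algebra Fq K] [Algebra (ZMod p) K]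
    (b c : ℤ)
    (hbc : b * (((q ^ (n - m) - 1) / (q - 1) : ℕ) : ℤ)
        - c * (((q ^ m - 1) / (q - 1) : ℕ) : ℤ) = 1)
    (ψ₀ : ZMod p → ℂ) (hψ₀ : IsAddCharFn ψ₀) (hψ₀nt : ∃ a, ψ₀ a ≠ 1)
    (u : K) (hu : u ≠ 0) :
    ∑ x : K, ∑ z : K, ∑ y : Kˣ, ∑ t : Kˣ,
        ψ₀ (Algebra.trace (ZMod p) K
          (-(t : K) * u⁻¹ * x ^ ((q ^ n - 1) / (q - 1))
              * ((y : K) ^ ((q ^ m - 1) / (q - 1)))⁻¹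
            + (t : K) * z ^ ((q ^ (n - m) - 1) / (q - 1)) + x - (y : K) - z))
      = (Fintype.card K : ℂ) ^ 2 *
        (-1 + (Nat.card {v : Kˣ |
            u ^ (-b) * (v : K) ^ ((((q ^ m - 1) / (q - 1) : ℕ)) : ℤ)
              + u ^ (c * ((q ^ m : ℕ) : ℤ))
                * (v : K) ^ (-(((((q ^ (n - m) - 1) / (q - 1)) * q ^ m : ℕ)) : ℤ))
              = 1} : ℂ)) := by
  have : Fact p.Prime := ⟨hp⟩
  have hq2 : 2 ≤ q := hq ▸ hp.two_le.trans (Nat.le_self_pow hκ.ne' p)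
  have invariant (a : K) : ψ₀ (Algebra.trace (ZMod p) K (a ^ q ^ m)) =
      ψ₀ (Algebra.trace (ZMod p) K a) := by
    rw [hq, ← pow_mul, ← trace_pow_card_pow (κ * m) a, ZMod.card]
  exact statement8_general
    (addChar_comp_trace_ne_one (hψ₀.toAddChar_ne_one hψ₀nt)) invariant
    (pow_sub_one_div_sub_one_ne_zero hq2 (by omega)) (pow_sub_one_div_sub_one_eq_add hq2 hmn.le)
    hbc hu
end

section
/- Assume bC − cB = 1. Then for every u ∈ K^×, the map (x,y,z) ↦ (x, x^{b+c·q^m}·y^{−b}·z^{−c}) is a bijection from the set {(x,y,z) ∈ K^× × K^× × K^× : x^A = u·y^B·z^C} onto K^× × K^×, with inverse (x,v) ↦ (x, x·u^c·v^{−C}, x^{q^m}·u^{−b}·v^B). -/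
/-- The set `{(x,y,z) ∈ K^× × K^× × K^× : x^A = u y^B z^C}`, where
`A = (q^n-1)/(q-1)`, `B = (q^m-1)/(q-1)`, `C = (q^{n-m}-1)/(q-1)`. -/
def triSet (q n m : ℕ) {K : Type*} [Field K] (u : Kˣ) : Set (Kˣ × Kˣ × Kˣ) :=
  {s | s.1 ^ ((q ^ n - 1) / (q - 1))
      = u * s.2.1 ^ ((q ^ m - 1) / (q - 1)) * s.2.2 ^ ((q ^ (n - m) - 1) / (q - 1))}

/-- The map `(x, y, z) ↦ (x, x^{b + c q^m} y^{-b} z^{-c})`. -/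
def triFwd (q m : ℕ) (b c : ℤ) {K : Type*} [Field K] : Kˣ × Kˣ × Kˣ → Kˣ × Kˣ :=
  fun s => (s.1, s.1 ^ (b + c * ((q ^ m : ℕ) : ℤ)) * s.2.1 ^ (-b) * s.2.2 ^ (-c))

/-- The map `(x, v) ↦ (x, x u^c v^{-C}, x^{q^m} u^{-b} v^B)`. -/
def triBwd (q n m : ℕ) (b c : ℤ) {K : Type*} [Field K] (u : Kˣ) :
    Kˣ × Kˣ → Kˣ × Kˣ × Kˣ :=
  fun w => (w.1,
    w.1 * u ^ c * w.2 ^ (-(((q ^ (n - m) - 1) / (q - 1) : ℕ) : ℤ)),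
    w.1 ^ (q ^ m) * u ^ (-b) * w.2 ^ ((((q ^ m - 1) / (q - 1) : ℕ)) : ℤ))

/-!
Put `s = x / y` and `t = x ^ Q / z` with `Q = q ^ m`. Because `A = B + C * Q`, the equation
`x ^ A = u * y ^ B * z ^ C` says `s ^ B * t ^ C = u`, while the second coordinate of the map is
`v = s ^ b * t ^ c`. The matrix of exponents `!![b, c; B, C]` has determinant one, so for each `x`
the pair `(v, u)` determines `(s, t)` by Cramer's rule, in any commutative group.
-/

section CommGroup

variable {G : Type*} [CommGroup G]

lemma zpow_mul_zpow_comp (s t : G) (a b c d e f : ℤ) :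
    (s ^ a * t ^ b) ^ e * (s ^ c * t ^ d) ^ f = s ^ (a * e + c * f) * t ^ (b * e + d * f) := by
  simp only [mul_zpow, zpow_add, zpow_mul]
  exact mul_mul_mul_comm _ _ _ _

lemma zpow_mul_zpow_system_iff {a b c d : ℤ} (hdet : a * d - b * c = 1) {s t v w : G} :
    s ^ a * t ^ b = v ∧ s ^ c * t ^ d = w ↔
      s = v ^ d * w ^ (-b) ∧ t = v ^ (-c) * w ^ a := by
  constructor
  · rintro ⟨rfl, rfl⟩
    have hs : a * d + c * -b = 1 ∧ b * d + d * -b = 0 := ⟨by linarith, by ring⟩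
    have ht : a * -c + c * a = 0 ∧ b * -c + d * a = 1 := ⟨by ring, by linarith⟩
    simp only [zpow_mul_zpow_comp, hs, ht, zpow_one, zpow_zero, mul_one, one_mul, and_self]
  · rintro ⟨rfl, rfl⟩
    have hv : d * a + -c * b = 1 ∧ -b * a + a * b = 0 := ⟨by linarith, by ring⟩
    have hw : d * c + -c * d = 0 ∧ -b * c + a * d = 1 := ⟨by ring, by linarith⟩
    simp only [zpow_mul_zpow_comp, hv, hw, zpow_one, zpow_zero, mul_one, one_mul, and_self]

/-- The surface `x ^ (B + C * Q) = u * y ^ B * z ^ C` in `G × G × G`, with arbitrary integer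
exponents; `triSet` is the case `B = (q ^ m - 1) / (q - 1)`, `C = (q ^ (n - m) - 1) / (q - 1)`,
`Q = q ^ m`. -/
def monomialSurface (B C Q : ℤ) (u : G) : Set (G × G × G) :=
  {s | s.1 ^ (B + C * Q) = u * s.2.1 ^ B * s.2.2 ^ C}

/-- The global chart of `monomialSurface B C Q u` when `b * C - c * B = 1`, extended by the same
formula to all of `G × G × G`; generalizes `triFwd`. -/
def monomialChart (Q b c : ℤ) : G × G × G → G × G :=
  fun s ↦ (s.1, s.1 ^ (b + c * Q) * s.2.1 ^ (-b) * s.2.2 ^ (-c))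

/-- The parametrization of `monomialSurface B C Q u` inverse to `monomialChart Q b c` when
`b * C - c * B = 1`; generalizes `triBwd`. -/
def monomialParam (B C Q b c : ℤ) (u : G) : G × G → G × G × G :=
  fun w ↦ (w.1, w.1 * u ^ c * w.2 ^ (-C), w.1 ^ Q * u ^ (-b) * w.2 ^ B)

lemma mem_monomialSurface_iff_div {B C Q : ℤ} {u x y z : G} :
    (x, y, z) ∈ monomialSurface B C Q u ↔ (x / y) ^ B * (x ^ Q / z) ^ C = u := by
  rw [monomialSurface, Set.mem_ofPred_eq, div_zpow, div_zpow, div_mul_div_comm,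
    div_eq_iff_eq_mul, zpow_add, zpow_mul', mul_assoc]

lemma monomialChart_eq_div (Q b c : ℤ) (x y z : G) :
    monomialChart Q b c (x, y, z) = (x, (x / y) ^ b * (x ^ Q / z) ^ c) := by
  rw [monomialChart, div_zpow, div_zpow, div_mul_div_comm, zpow_add, zpow_mul', zpow_neg, zpow_neg,
    mul_assoc, ← mul_inv, div_eq_mul_inv]

lemma mem_monomialSurface_and_monomialChart_eq_iff {B C Q b c : ℤ} (hbc : b * C - c * B = 1)
    {u : G} {s : G × G × G} {w : G × G} :
    s ∈ monomialSurface B C Q u ∧ monomialChart Q b c s = w ↔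
      s = monomialParam B C Q b c u w := by
  obtain ⟨x, y, z⟩ := s
  obtain ⟨x', v⟩ := w
  have solve_y : x / y = v ^ C * u ^ (-c) ↔ y = x * u ^ c * v ^ (-C) := by
    rw [div_eq_iff_comm, mul_comm, ← div_div, zpow_neg, div_inv_eq_mul, zpow_neg, div_eq_mul_inv,
      eq_comm]
  have solve_z : x ^ Q / z = v ^ (-B) * u ^ b ↔ z = x ^ Q * u ^ (-b) * v ^ B := by
    rw [div_eq_iff_comm, mul_comm, ← div_div, zpow_neg, div_inv_eq_mul, zpow_neg, div_eq_mul_inv,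
      eq_comm]
  rw [mem_monomialSurface_iff_div, monomialChart_eq_div, Prod.mk.injEq, and_left_comm,
    and_comm (b := _ = v), zpow_mul_zpow_system_iff hbc, solve_y, solve_z, monomialParam,
    Prod.mk.injEq, Prod.mk.injEq]
  exact and_congr_right fun hx ↦ by rw [hx]

theorem statement9_general {B C Q b c : ℤ} (hbc : b * C - c * B = 1) (u : G) :
    Set.BijOn (monomialChart Q b c) (monomialSurface B C Q u) Set.univ
    ∧ (∀ s ∈ monomialSurface B C Q u, monomialParam B C Q b c u (monomialChart Q b c s) = s)
    ∧ (∀ w : G × G, monomialParam B C Q b c u w ∈ monomialSurface B C Q u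
        ∧ monomialChart Q b c (monomialParam B C Q b c u w) = w) := by
  have left_inv : ∀ s ∈ monomialSurface B C Q u,
      monomialParam B C Q b c u (monomialChart Q b c s) = s := fun s hs ↦
    ((mem_monomialSurface_and_monomialChart_eq_iff hbc).1 ⟨hs, rfl⟩).symm
  have right_inv (w : G × G) : monomialParam B C Q b c u w ∈ monomialSurface B C Q u
      ∧ monomialChart Q b c (monomialParam B C Q b c u w) = w :=
    (mem_monomialSurface_and_monomialChart_eq_iff hbc).2 rfl
  have invOn : Set.InvOn (monomialParam B C Q b c u) (monomialChart Q b c)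
      (monomialSurface B C Q u) Set.univ := ⟨left_inv, fun w _ ↦ (right_inv w).2⟩
  exact ⟨invOn.bijOn (Set.mapsTo_univ _ _) fun w _ ↦ (right_inv w).1, left_inv, right_inv⟩

end CommGroup

lemma pow_sub_one_div_eq_add {q n m : ℕ} (hq : 1 < q) (hmn : m ≤ n) :
    (q ^ n - 1) / (q - 1) =
      (q ^ m - 1) / (q - 1) + (q ^ (n - m) - 1) / (q - 1) * q ^ m := by
  obtain ⟨k, rfl⟩ := Nat.exists_eq_add_of_le hmn
  rw [Nat.add_sub_cancel_left, ← Nat.geomSum_eq hq, ← Nat.geomSum_eq hq, ← Nat.geomSum_eq hq,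
    Finset.sum_range_add, Finset.sum_mul]
  simp only [pow_add, mul_comm]

section Units

variable {K : Type*} [Field K]

lemma triSet_eq_monomialSurface {q n m : ℕ} (hq : 1 < q) (hmn : m ≤ n) (u : Kˣ) :
    triSet q n m u = monomialSurface (((q ^ m - 1) / (q - 1) : ℕ) : ℤ)
      (((q ^ (n - m) - 1) / (q - 1) : ℕ) : ℤ) ((q ^ m : ℕ) : ℤ) u := by
  simp only [triSet, monomialSurface, pow_sub_one_div_eq_add hq hmn, ← Nat.cast_mul,
    ← Nat.cast_add, zpow_natCast]

lemma triFwd_eq_monomialChart (q m : ℕ) (b c : ℤ) :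
    triFwd q m b c = monomialChart (G := Kˣ) ((q ^ m : ℕ) : ℤ) b c :=
  rfl

lemma triBwd_eq_monomialParam (q n m : ℕ) (b c : ℤ) (u : Kˣ) :
    triBwd q n m b c u = monomialParam (((q ^ m - 1) / (q - 1) : ℕ) : ℤ)
      (((q ^ (n - m) - 1) / (q - 1) : ℕ) : ℤ) ((q ^ m : ℕ) : ℤ) b c u := by
  funext w
  simp only [triBwd, monomialParam, zpow_natCast]

end Units

theorem statement9 (p q n m : ℕ) (hp : p.Prime) (κ : ℕ) (hκ : 0 < κ) (hq : q = p ^ κ)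
    (hm : 1 ≤ m) (hmn : m < n)
    (Fq : Type*) [Field Fq] [Fintype Fq] (hcard : Fintype.card Fq = q)
    (K : Type*) [Field K] [Fintype K] [Algebra Fq K]
    (b c : ℤ)
    (hbc : b * (((q ^ (n - m) - 1) / (q - 1) : ℕ) : ℤ)
        - c * (((q ^ m - 1) / (q - 1) : ℕ) : ℤ) = 1)
    (u : Kˣ) :
    Set.BijOn (triFwd q m b c) (triSet q n m u) Set.univ
    ∧ (∀ s ∈ triSet q n m u, triBwd q n m b c u (triFwd q m b c s) = s)
    ∧ (∀ w : Kˣ × Kˣ, triBwd q n m b c u w ∈ triSet q n m u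
        ∧ triFwd q m b c (triBwd q n m b c u w) = w) := by
  have hq_one_lt : 1 < q := hcard ▸ Fintype.one_lt_card
  rw [triSet_eq_monomialSurface hq_one_lt hmn.le, triFwd_eq_monomialChart, triBwd_eq_monomialParam]
  exact statement9_general hbc u
end

section
/- Let χ : F_q^× → ℂ^× be a multiplicative character of order exactly q−1. Then for every u ∈ K^×: ∑_{j=0}^{q−2} ∑_{v ∈ K^×, u^{−b}·v^B + u^{c·q^m}·v^{−C·q^m} = 1} χ(Norm_{K/F_q}(v))^j = −1 + #{ w ∈ K : u^b·w^{q^m} − u^{b+c·q^m}·w^{q^n} = w }. -/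
/-!
Since `χ` is faithful, `∑ j, χ (N v) ^ j` vanishes unless `N v = 1`, when it equals `q - 1`. In the
cyclic group `Kˣ` the kernel of the norm `v ↦ v ^ ((#K - 1) / (q - 1))` is the set of
`(q - 1)`-st powers, so the sum over `j` is the number of `w` with `v = w / w ^ q`. Hence the
character sum over a finite set of nonzero `v` counts the `w` for which `w / w ^ q` lies in that
set. The substitution `v = w / w ^ q` turns the trinomial equation in `v` into the linearized
equation in `w`, divided by a monomial in `w`; the only root this loses is `w = 0`.
-/

open Finset

section MulChar

variable {M R : Type*} [CommMonoid M] [IsCyclic Mˣ] [Finite Mˣ]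

theorem mulChar_apply_eq_one_iff_of_orderOf_eq_card [CommMonoidWithZero R] {χ : MulChar M R}
    (hχ : orderOf χ = Nat.card Mˣ) (a : Mˣ) : χ a = 1 ↔ a = 1 := by
  refine ⟨fun ha => ?_, fun ha => by simp [ha]⟩
  obtain ⟨g, hg⟩ := IsCyclic.exists_generator (α := Mˣ)
  obtain ⟨k, rfl⟩ := mem_powers_iff_mem_zpowers.mpr (hg a)
  have χ_pow_eq_one : χ ^ k = 1 := by
    rw [MulChar.eq_iff hg, MulChar.pow_apply_coe, MulChar.one_apply_coe, ← map_pow]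
    exact ha
  have card_dvd : Nat.card Mˣ ∣ k := hχ ▸ orderOf_dvd_of_pow_eq_one χ_pow_eq_one
  exact orderOf_dvd_iff_pow_eq_one.mp ((orderOf_dvd_natCard g).trans card_dvd)

theorem sum_range_mulChar_apply_pow [CommRing R] [IsDomain R] [DecidableEq Mˣ] {χ : MulChar M R}
    (hχ : orderOf χ = Nat.card Mˣ) (a : Mˣ) :
    ∑ j ∈ range (Nat.card Mˣ), χ a ^ j = if a = 1 then (Nat.card Mˣ : R) else 0 := by
  split_ifs with ha
  · simp [ha]
  · have χ_apply_ne_one : χ a - 1 ≠ 0 :=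
      sub_ne_zero.mpr (mt (mulChar_apply_eq_one_iff_of_orderOf_eq_card hχ a).mp ha)
    have χ_apply_pow_card : χ a ^ Nat.card Mˣ = 1 := by
      rw [← MulChar.pow_apply_coe, ← hχ, pow_orderOf_eq_one, MulChar.one_apply_coe]
    refine eq_zero_of_ne_zero_of_mul_right_eq_zero χ_apply_ne_one ?_
    rw [geom_sum_mul, χ_apply_pow_card, sub_self]

end MulChar

section CyclicGroup

variable {G : Type*} [CommGroup G] [IsCyclic G] {d e : ℕ}

theorem range_powMonoidHom_eq_ker_of_card_eq_mul [Finite G] (h : Nat.card G = d * e) :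
    (powMonoidHom d : G →* G).range = (powMonoidHom e).ker := by
  have hd : 0 < d := Nat.pos_of_mul_pos_right (h ▸ Nat.card_pos)
  refine Subgroup.eq_of_le_of_card_ge ?_ ?_
  · rintro _ ⟨w, rfl⟩
    rw [MonoidHom.mem_ker, powMonoidHom_apply, powMonoidHom_apply, ← pow_mul, ← h,
      pow_card_eq_one']
  · rw [IsCyclic.card_powMonoidHom_range, IsCyclic.card_powMonoidHom_ker, h,
      Nat.gcd_mul_left_left, Nat.gcd_mul_right_left, Nat.mul_div_cancel_left e hd]

theorem card_filter_pow_eq_of_card_eq_mul [Fintype G] [DecidableEq G] (h : Nat.card G = d * e)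
    (t : G) :
    #{w : G | w ^ d = t} = if t ^ e = 1 then d else 0 := by
  have mem_range_iff : t ∈ (powMonoidHom d : G →* G).range ↔ t ^ e = 1 := by
    rw [range_powMonoidHom_eq_ker_of_card_eq_mul h, MonoidHom.mem_ker, powMonoidHom_apply]
  split_ifs with ht
  · obtain ⟨s, rfl⟩ := mem_range_iff.mpr ht
    calc #{w : G | w ^ d = s ^ d}
        = Nat.card ((powMonoidHom d : G →* G) ⁻¹' {powMonoidHom d s}) := by
          rw [Nat.card_coe_set_eq, ← Set.ncard_coe_finset]
          congr 1
          ext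
          simp
      _ = Nat.card (powMonoidHom d : G →* G).ker :=
          Nat.card_congr ((powMonoidHom d).fiberEquivKer s)
      _ = d := by rw [IsCyclic.card_powMonoidHom_ker, h, Nat.gcd_mul_right_left]
  · rw [card_eq_zero, filter_eq_empty_iff]
    exact fun w _ hw => ht (mem_range_iff.mp ⟨w, hw⟩)

end CyclicGroup

section FiniteField

theorem norm_eq_one_iff_pow_eq_one {F K : Type*} [Field F] [Field K] [Finite K] [Algebra F K]
    (v : K) :
    Algebra.norm F v = 1 ↔ v ^ ((Nat.card K - 1) / (Nat.card F - 1)) = 1 := by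
  rw [← FiniteField.algebraMap_norm_eq_pow, FaithfulSMul.algebraMap_eq_one_iff]

variable {F K : Type*} [Field F] [Fintype F] [Field K] [Fintype K] [Algebra F K]

variable (F) in
theorem card_filter_inv_pow_card_sub_one_eq [DecidableEq F] [DecidableEq K] {v : K} (hv : v ≠ 0) :
    #{w : K | (w ^ (Fintype.card F - 1))⁻¹ = v} =
      if Algebra.norm F v = 1 then Fintype.card F - 1 else 0 := by
  lift v to Kˣ using hv.isUnit
  have card_sub_one_ne_zero : Fintype.card F - 1 ≠ 0 :=
    (Nat.sub_pos_of_lt Fintype.one_lt_card).ne'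
  have card_units_eq : Nat.card Kˣ =
      (Fintype.card F - 1) * ((Nat.card K - 1) / (Nat.card F - 1)) := by
    rw [Nat.card_units, ← Nat.card_eq_fintype_card, Nat.mul_div_cancel']
    rw [Module.natCard_eq_pow_finrank (K := F) (V := K)]
    simpa using Nat.sub_dvd_pow_sub_pow (Nat.card F) 1 (Module.finrank F K)
  have solutions_eq_map : ({w : K | (w ^ (Fintype.card F - 1))⁻¹ = v} : Finset K) =
      ({w : Kˣ | w ^ (Fintype.card F - 1) = v⁻¹} : Finset Kˣ).map
        ⟨Units.val, Units.val_injective⟩ := by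
    ext w
    simp only [mem_filter_univ, mem_map, Function.Embedding.coeFn_mk, ← inv_inj (b := (v : K)),
      inv_inv]
    constructor
    · intro hw
      have hw₀ : w ≠ 0 := by
        rintro rfl
        exact v⁻¹.ne_zero (by rw [Units.val_inv_eq_inv_val, ← hw, zero_pow card_sub_one_ne_zero])
      exact ⟨Units.mk0 w hw₀, Units.ext (by simpa using hw), rfl⟩
    · rintro ⟨w, hw, rfl⟩
      rw [← Units.val_pow_eq_pow_val, hw, Units.val_inv_eq_inv_val]
  rw [solutions_eq_map, card_map, card_filter_pow_eq_of_card_eq_mul card_units_eq]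
  simp only [norm_eq_one_iff_pow_eq_one, inv_pow, inv_eq_one, Units.ext_iff,
    Units.val_pow_eq_pow_val, Units.val_one]

theorem sum_range_sum_mulChar_norm_pow [DecidableEq K] {R : Type*} [CommRing R] [IsDomain R]
    {χ : MulChar F R} (hχ : orderOf χ = Fintype.card F - 1) {S : Finset K} (hS : 0 ∉ S) :
    ∑ j ∈ range (Fintype.card F - 1), ∑ v ∈ S, χ (Algebra.norm F v) ^ j =
      (#{w : K | (w ^ (Fintype.card F - 1))⁻¹ ∈ S} : R) := by
  classical
  have card_units_eq : Nat.card Fˣ = Fintype.card F - 1 := by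
    rw [Nat.card_units, Nat.card_eq_fintype_card]
  rw [sum_comm, ← sum_card_fiberwise_eq_card_filter, Nat.cast_sum]
  refine sum_congr rfl fun v hv => ?_
  have hv₀ : v ≠ 0 := ne_of_mem_of_not_mem hv hS
  have norm_ne_zero : Algebra.norm F v ≠ 0 := Algebra.norm_ne_zero_iff.mpr hv₀
  have char_sum := sum_range_mulChar_apply_pow (hχ.trans card_units_eq.symm)
    (Units.mk0 _ norm_ne_zero)
  rw [card_units_eq, Units.val_mk0] at char_sum
  rw [char_sum, card_filter_inv_pow_card_sub_one_eq F hv₀, Nat.cast_ite, Nat.cast_zero]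
  simp only [Units.ext_iff, Units.val_mk0, Units.val_one]

end FiniteField

section LinearizedEquation

theorem pow_sub_one_pow_div_mul_self {M : Type*} [Monoid M] (w : M) {q : ℕ} (hq : 0 < q) (k : ℕ) :
    (w ^ (q - 1)) ^ ((q ^ k - 1) / (q - 1)) * w = w ^ q ^ k := by
  have sub_one_dvd : q - 1 ∣ q ^ k - 1 := by simpa using Nat.sub_dvd_pow_sub_pow q 1 k
  rw [← pow_mul, ← pow_succ, Nat.mul_div_cancel' sub_one_dvd, Nat.sub_add_cancel (Nat.pow_pos hq)]

variable {K : Type*} [Field K] {q m n : ℕ} {x y w : K}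

theorem trinomial_inv_pow_eq_one_iff (hq : 0 < q) (hmn : m ≤ n) (hx : x ≠ 0) (hw : w ≠ 0) :
    x⁻¹ * ((w ^ (q - 1))⁻¹) ^ ((q ^ m - 1) / (q - 1))
        + y * ((w ^ (q - 1))⁻¹) ^ (-(((q ^ (n - m) - 1) / (q - 1) * q ^ m : ℕ) : ℤ)) = 1 ↔
      x * w ^ q ^ m - x * y * w ^ q ^ n = w := by
  set t := w ^ (q - 1)
  set B := (q ^ m - 1) / (q - 1)
  set C := (q ^ (n - m) - 1) / (q - 1)
  have pow_qm : w ^ q ^ m = t ^ B * w := (pow_sub_one_pow_div_mul_self w hq m).symm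
  have pow_qn : w ^ q ^ n = t ^ (C * q ^ m) * (t ^ B * w) := by
    rw [← pow_qm, pow_mul, ← mul_pow, pow_sub_one_pow_div_mul_self w hq, ← pow_mul, ← pow_add,
      Nat.sub_add_cancel hmn]
  have ht₀ : t ≠ 0 := pow_ne_zero _ hw
  have multiplier_ne_zero : x * (t ^ B * w) ≠ 0 := by positivity
  have sub_eq_mul : x * w ^ q ^ m - x * y * w ^ q ^ n - w =
      x * (t ^ B * w) * (1 - (x⁻¹ * (t ^ B)⁻¹ + y * t ^ (C * q ^ m))) := by
    rw [pow_qm, pow_qn]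
    field_simp
    ring
  rw [← sub_eq_zero (b := w), sub_eq_mul, mul_eq_zero, or_iff_right multiplier_ne_zero,
    sub_eq_zero, eq_comm, zpow_neg, zpow_natCast, inv_pow, inv_pow, inv_inv]

end LinearizedEquation

theorem statement10_general {F K R : Type*} [Field F] [Fintype F] [Field K] [Fintype K]
    [DecidableEq K] [Algebra F K] [CommRing R] [IsDomain R] {χ : MulChar F R}
    (hχ : orderOf χ = Fintype.card F - 1) {m n : ℕ} (hmn : m ≤ n) {x : K} (hx : x ≠ 0) (y : K) :
    ∑ j ∈ range (Fintype.card F - 1), ∑ v : K with v ≠ 0 ∧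
        x⁻¹ * v ^ ((Fintype.card F ^ m - 1) / (Fintype.card F - 1))
          + y * v ^ (-(((Fintype.card F ^ (n - m) - 1) / (Fintype.card F - 1)
            * Fintype.card F ^ m : ℕ) : ℤ)) = 1,
        χ (Algebra.norm F v) ^ j =
      -1 + (Nat.card {w : K |
        x * w ^ Fintype.card F ^ m - x * y * w ^ Fintype.card F ^ n = w} : R) := by
  set q := Fintype.card F
  have q_pos : 0 < q := Fintype.card_pos
  have q_sub_one_ne_zero : q - 1 ≠ 0 := (Nat.sub_pos_of_lt Fintype.one_lt_card).ne'
  set S : Finset K := {v : K | v ≠ 0 ∧ x⁻¹ * v ^ ((q ^ m - 1) / (q - 1))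
    + y * v ^ (-(((q ^ (n - m) - 1) / (q - 1) * q ^ m : ℕ) : ℤ)) = 1}
  have zero_notMem : (0 : K) ∉ S := by simp [S]
  have solutions_eq_insert : {w : K | x * w ^ q ^ m - x * y * w ^ q ^ n = w} =
      (insert 0 ({w : K | (w ^ (q - 1))⁻¹ ∈ S} : Finset K) : Finset K) := by
    ext w
    rcases eq_or_ne w 0 with rfl | hw
    · simp [q_pos.ne']
    · rw [Set.mem_ofPred_eq, ← trinomial_inv_pow_eq_one_iff q_pos hmn hx hw]
      simp [S, hw]
  rw [sum_range_sum_mulChar_norm_pow hχ zero_notMem, solutions_eq_insert, Nat.card_coe_set_eq,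
    Set.ncard_coe_finset, card_insert_of_notMem (by simp [q_sub_one_ne_zero, zero_notMem])]
  push_cast
  ring

theorem statement10 (p q n m : ℕ) (hp : p.Prime) (κ : ℕ) (hκ : 0 < κ) (hq : q = p ^ κ)
    (hm : 1 ≤ m) (hmn : m < n)
    (Fq : Type*) [Field Fq] [Fintype Fq] (hcard : Fintype.card Fq = q)
    (K : Type*) [Field K] [Fintype K] [DecidableEq K] [Algebra Fq K]
    (b c : ℤ)
    (χ : MulChar Fq ℂ) (hχ : orderOf χ = q - 1)
    (u : K) (hu : u ≠ 0) :
    ∑ j ∈ Finset.range (q - 1),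
        ∑ v ∈ Finset.univ.filter (fun v : K => v ≠ 0 ∧
            u ^ (-b) * v ^ ((((q ^ m - 1) / (q - 1) : ℕ)) : ℤ)
              + u ^ (c * ((q ^ m : ℕ) : ℤ))
                * v ^ (-(((((q ^ (n - m) - 1) / (q - 1)) * q ^ m : ℕ)) : ℤ)) = 1),
          χ (Algebra.norm Fq v) ^ j
      = -1 + (Nat.card {w : K |
          u ^ (b : ℤ) * w ^ (q ^ m) - u ^ (b + c * ((q ^ m : ℕ) : ℤ)) * w ^ (q ^ n)
            = w} : ℂ) := by
  subst hcard
  simpa only [zpow_neg, zpow_natCast, zpow_add₀ hu] using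
    statement10_general hχ hmn.le (zpow_ne_zero b hu) (u ^ (c * ((Fintype.card Fq ^ m : ℕ) : ℤ)))
end

section
/- Assume bC − cB = 1, let g := gcd(q−1, c) and k := (q−1)/g. Then for every u ∈ K^×, the map w ↦ w·u^{−c/g} is a bijection from { w ∈ K^× : w^{q^m−1} − w^{q^n−1} = u^{−k} } onto { w ∈ K^× : u^{k·C·b}·w^{q^m−1} − u^{k·C·(b+c·q^m)}·w^{q^n−1} = 1 }; in particular these two sets have the same cardinality. -/
/-!
Put `s = c / g` and `t = u ^ (-s)`. Replacing `w` by `w * t` in the second equation multiplies its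
two coefficients by `t ^ (q ^ m - 1)` and `t ^ (q ^ n - 1)`. Since `q ^ m - 1 = (q - 1) * B`,
`q ^ n - 1 = (q - 1) * (B + C * q ^ m)` and `s * (q - 1) = k * c`, the relation `b * C - c * B = 1`
turns both coefficients into `u ^ k`; in the second one the terms in `q ^ m` cancel.
What remains is the first equation multiplied by `u ^ k`.
-/

theorem pow_sub_one_eq_mul_div (q m : ℕ) : q ^ m - 1 = (q - 1) * ((q ^ m - 1) / (q - 1)) :=
  (Nat.mul_div_cancel' (Nat.sub_one_dvd_pow_sub_one q m)).symm

theorem pow_sub_one_eq_mul_div_add {q m n : ℕ} (hmn : m ≤ n) :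
    q ^ n - 1 =
      (q - 1) * ((q ^ m - 1) / (q - 1) + (q ^ (n - m) - 1) / (q - 1) * q ^ m) := by
  rw [mul_add, ← mul_assoc, ← pow_sub_one_eq_mul_div, ← pow_sub_one_eq_mul_div, Nat.sub_one_mul,
    ← pow_add, Nat.sub_add_cancel hmn]
  rcases q.eq_zero_or_pos with rfl | hq
  · cases m <;> cases n <;> simp_all
  · have hone : 1 ≤ q ^ m := Nat.one_le_pow _ _ hq
    have hle : q ^ m ≤ q ^ n := Nat.pow_le_pow_right hq hmn
    omega

theorem zpow_mul_zpow_neg_pow {G : Type*} [Group G] (u : G) {a e s : ℤ} {N : ℕ}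
    (h : a - s * N = e) : u ^ a * (u ^ (-s)) ^ N = u ^ e := by
  rw [← zpow_natCast, ← zpow_mul, ← zpow_add, neg_mul, ← sub_eq_add_neg, h]

section CommRing

variable {R : Type*} [CommRing R]

theorem mul_pow_sub_mul_pow_eq_one_iff {x y d t : Rˣ} {M N : ℕ}
    (hx : x * t ^ M = d) (hy : y * t ^ N = d) (w : Rˣ) :
    (x : R) * ((w * t : Rˣ) : R) ^ M - (y : R) * ((w * t : Rˣ) : R) ^ N = 1 ↔
      (w : R) ^ M - (w : R) ^ N = ((d⁻¹ : Rˣ) : R) := by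
  have hxw : (x : R) * ((w * t : Rˣ) : R) ^ M = d * (w : R) ^ M := by
    rw [← hx]; push_cast; ring
  have hyw : (y : R) * ((w * t : Rˣ) : R) ^ N = d * (w : R) ^ N := by
    rw [← hy]; push_cast; ring
  rw [hxw, hyw, ← mul_sub, mul_comm, Units.mul_eq_one_iff_eq_inv]

theorem bijOn_mul_right_pow_sub_pow {x y d t : Rˣ} {M N : ℕ}
    (hx : x * t ^ M = d) (hy : y * t ^ N = d) :
    Set.BijOn (fun w : Rˣ => w * t)
      {w : Rˣ | (w : R) ^ M - (w : R) ^ N = ((d⁻¹ : Rˣ) : R)}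
      {w : Rˣ | (x : R) * (w : R) ^ M - (y : R) * (w : R) ^ N = 1} :=
  (Equiv.mulRight t).bijOn (mul_pow_sub_mul_pow_eq_one_iff hx hy)

theorem bijOn_mul_zpow_neg {d B C Q : ℕ} {b c g k s : ℤ} (hbc : b * C - c * B = 1)
    (hk : k * g = d) (hs : s * g = c) (u : Rˣ) :
    Set.BijOn (fun w : Rˣ => w * u ^ (-s))
      {w : Rˣ | (w : R) ^ (d * B) - (w : R) ^ (d * (B + C * Q)) = ((u ^ (-k) : Rˣ) : R)}
      {w : Rˣ | ((u ^ (k * C * b) : Rˣ) : R) * (w : R) ^ (d * B)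
        - ((u ^ (k * C * (b + c * Q)) : Rˣ) : R) * (w : R) ^ (d * (B + C * Q)) = 1} := by
  have hfst : k * C * b - s * ((d * B : ℕ) : ℤ) = k := by
    push_cast
    linear_combination k * hbc - k * B * hs + s * B * hk
  have hsnd : k * C * (b + c * Q) - s * ((d * (B + C * Q) : ℕ) : ℤ) = k := by
    push_cast
    linear_combination k * hbc - k * (B + C * Q) * hs + s * (B + C * Q) * hk
  rw [zpow_neg u k]
  exact bijOn_mul_right_pow_sub_pow (zpow_mul_zpow_neg_pow u hfst) (zpow_mul_zpow_neg_pow u hsnd)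

theorem statement13_general {q m n : ℕ} (hmn : m ≤ n) {b c : ℤ}
    (hbc : b * (((q ^ (n - m) - 1) / (q - 1) : ℕ) : ℤ)
      - c * (((q ^ m - 1) / (q - 1) : ℕ) : ℤ) = 1)
    {g k : ℤ} (hk : k * g = (q - 1 : ℕ)) (hgc : g ∣ c) (u : Rˣ) :
    Set.BijOn (fun w : Rˣ => w * u ^ (-(c / g)))
        {w : Rˣ | (w : R) ^ (q ^ m - 1) - (w : R) ^ (q ^ n - 1) = ((u ^ (-k) : Rˣ) : R)}
        {w : Rˣ | ((u ^ (k * (((q ^ (n - m) - 1) / (q - 1) : ℕ) : ℤ) * b) : Rˣ) : R)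
              * (w : R) ^ (q ^ m - 1)
            - ((u ^ (k * (((q ^ (n - m) - 1) / (q - 1) : ℕ) : ℤ)
                  * (b + c * ((q ^ m : ℕ) : ℤ))) : Rˣ) : R)
              * (w : R) ^ (q ^ n - 1) = 1}
    ∧ Nat.card {w : Rˣ | (w : R) ^ (q ^ m - 1) - (w : R) ^ (q ^ n - 1)
            = ((u ^ (-k) : Rˣ) : R)}
      = Nat.card {w : Rˣ |
          ((u ^ (k * (((q ^ (n - m) - 1) / (q - 1) : ℕ) : ℤ) * b) : Rˣ) : R)
              * (w : R) ^ (q ^ m - 1)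
            - ((u ^ (k * (((q ^ (n - m) - 1) / (q - 1) : ℕ) : ℤ)
                  * (b + c * ((q ^ m : ℕ) : ℤ))) : Rˣ) : R)
              * (w : R) ^ (q ^ n - 1) = 1} := by
  have hbij := bijOn_mul_zpow_neg (Q := q ^ m) hbc hk (Int.ediv_mul_cancel hgc) u
  rw [← pow_sub_one_eq_mul_div, ← pow_sub_one_eq_mul_div_add hmn] at hbij
  exact ⟨hbij, Nat.card_congr hbij.equiv⟩

end CommRing

theorem statement13 (p q n m : ℕ) (hp : p.Prime) (κ : ℕ) (hκ : 0 < κ) (hq : q = p ^ κ)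
    (hm : 1 ≤ m) (hmn : m < n)
    (Fq : Type*) [Field Fq] [Fintype Fq] (hcard : Fintype.card Fq = q)
    (K : Type*) [Field K] [Fintype K] [Algebra Fq K]
    (b c : ℤ)
    (hbc : b * (((q ^ (n - m) - 1) / (q - 1) : ℕ) : ℤ)
        - c * (((q ^ m - 1) / (q - 1) : ℕ) : ℤ) = 1)
    -- g := gcd(q-1, c) and k := (q-1)/g
    (g k : ℕ) (hg : g = Int.gcd (((q - 1 : ℕ)) : ℤ) c) (hk : k = (q - 1) / g)
    (u : Kˣ) :
    Set.BijOn (fun w : Kˣ => w * u ^ (-(c / (g : ℤ))))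
        {w : Kˣ | (w : K) ^ (q ^ m - 1) - (w : K) ^ (q ^ n - 1)
            = ((u ^ (-(k : ℤ)) : Kˣ) : K)}
        {w : Kˣ | ((u ^ ((k : ℤ) * (((q ^ (n - m) - 1) / (q - 1) : ℕ) : ℤ) * b) : Kˣ) : K)
              * (w : K) ^ (q ^ m - 1)
            - ((u ^ ((k : ℤ) * (((q ^ (n - m) - 1) / (q - 1) : ℕ) : ℤ)
                  * (b + c * ((q ^ m : ℕ) : ℤ))) : Kˣ) : K)
              * (w : K) ^ (q ^ n - 1) = 1}
    ∧ Nat.card {w : Kˣ | (w : K) ^ (q ^ m - 1) - (w : K) ^ (q ^ n - 1)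
            = ((u ^ (-(k : ℤ)) : Kˣ) : K)}
      = Nat.card {w : Kˣ |
          ((u ^ ((k : ℤ) * (((q ^ (n - m) - 1) / (q - 1) : ℕ) : ℤ) * b) : Kˣ) : K)
              * (w : K) ^ (q ^ m - 1)
            - ((u ^ ((k : ℤ) * (((q ^ (n - m) - 1) / (q - 1) : ℕ) : ℤ)
                  * (b + c * ((q ^ m : ℕ) : ℤ))) : Kˣ) : K)
              * (w : K) ^ (q ^ n - 1) = 1} := by
  have hgq : g ∣ q - 1 := Int.natCast_dvd_natCast.1 (hg ▸ Int.gcd_dvd_left ..)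
  exact statement13_general hmn.le hbc (by exact_mod_cast hk ▸ Nat.div_mul_cancel hgq)
    (hg ▸ Int.gcd_dvd_right ..) u
end

section
/- Assume bC − cB = 1 and set d := (q−1)/gcd(q−1, b+c). If ν, μ ∈ F_q^× satisfy ν^n = μ^{b+c}, then ν^d = 1. -/
/-!
Modulo `q - 1` a geometric sum of powers of `q` is just its number of terms, so `b * C - c * B = 1`
reads `b * n - (b + c) * m ≡ 1`; hence `n` is prime to `g = gcd (q - 1, b + c)`. Put
`d = (q - 1) / g`. The relation `ν ^ n = μ ^ (b + c)` gives `ν ^ (n * d) = 1`, because `q - 1`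
divides `(b + c) * d`, while `ν ^ (g * d) = ν ^ (q - 1) = 1`. As `n` and `g` are coprime,
`ν ^ d = 1`.
-/

theorem sub_one_dvd_geom_sum_sub_natCast {R : Type*} [Ring R] (x : R) (k : ℕ) :
    x - 1 ∣ (∑ i ∈ Finset.range k, x ^ i) - k := by
  have hsum : (∑ i ∈ Finset.range k, x ^ i) - k = ∑ i ∈ Finset.range k, (x ^ i - 1) := by
    simp
  rw [hsum]
  exact Finset.dvd_sum fun i _ => sub_one_dvd_pow_sub_one x i

theorem natCast_sub_one_dvd_pow_sub_one_div_sub {q : ℕ} (hq : 2 ≤ q) (k : ℕ) :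
    ((q - 1 : ℕ) : ℤ) ∣ (((q ^ k - 1) / (q - 1) : ℕ) : ℤ) - k := by
  rw [← Nat.geomSum_eq hq k]
  push_cast [Nat.cast_sub (one_le_two.trans hq)]
  exact sub_one_dvd_geom_sum_sub_natCast (q : ℤ) k

theorem isCoprime_add_of_mul_sub_mul_eq_one {R : Type*} [CommRing R] {b c B C m k g : R}
    (hbc : b * C - c * B = 1) (hB : g ∣ B - m) (hC : g ∣ C - k) (hg : g ∣ b + c) :
    IsCoprime (m + k) g := by
  obtain ⟨u, hu⟩ := hB
  obtain ⟨v, hv⟩ := hC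
  obtain ⟨w, hw⟩ := hg
  refine ⟨b, b * v - c * u - m * w, ?_⟩
  linear_combination hbc - b * hv + c * hu + m * hw

theorem pow_div_gcd_eq_one_of_pow_eq_zpow {G : Type*} [Group G] {N n : ℕ} {e : ℤ} {x y : G}
    (hn : n.Coprime (Int.gcd N e)) (hx : x ^ N = 1) (hy : y ^ N = 1) (hxy : x ^ n = y ^ e) :
    x ^ (N / Int.gcd N e) = 1 := by
  set g := Int.gcd N e
  have hgd : g * (N / g) = N :=
    Nat.mul_div_cancel' (Int.natCast_dvd_natCast.mp (Int.gcd_dvd_left _ _))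
  obtain ⟨k, hk⟩ : (g : ℤ) ∣ e := Int.gcd_dvd_right _ _
  have hexp : e * (N / g : ℕ) = N * k := by
    rw [hk, mul_right_comm, ← Nat.cast_mul, hgd]
  have hpow_n : x ^ (n * (N / g)) = 1 := by
    rw [pow_mul, hxy, ← zpow_natCast, ← zpow_mul, hexp, zpow_mul, zpow_natCast, hy, one_zpow]
  have hpow_g : x ^ (g * (N / g)) = 1 := by rw [hgd, hx]
  simpa only [Nat.gcd_mul_right, hn.gcd_eq_one, one_mul] using
    pow_gcd_eq_one.mpr ⟨hpow_n, hpow_g⟩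

theorem statement16_general {G : Type*} [Group G] {q n m : ℕ} (hq : 2 ≤ q) (hmn : m ≤ n) {b c : ℤ}
    (hbc : b * (((q ^ (n - m) - 1) / (q - 1) : ℕ) : ℤ)
        - c * (((q ^ m - 1) / (q - 1) : ℕ) : ℤ) = 1)
    {ν μ : G} (hν : ν ^ (q - 1) = 1) (hμ : μ ^ (q - 1) = 1) (hνμ : ν ^ n = μ ^ (b + c)) :
    ν ^ ((q - 1) / Int.gcd ((q - 1 : ℕ) : ℤ) (b + c)) = 1 := by
  have hgq := Int.gcd_dvd_left ((q - 1 : ℕ) : ℤ) (b + c)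
  have hcop := isCoprime_add_of_mul_sub_mul_eq_one hbc
    (hgq.trans (natCast_sub_one_dvd_pow_sub_one_div_sub hq m))
    (hgq.trans (natCast_sub_one_dvd_pow_sub_one_div_sub hq (n - m)))
    (Int.gcd_dvd_right _ _)
  rw [← Nat.cast_add, Nat.add_sub_cancel' hmn, Nat.isCoprime_iff_coprime] at hcop
  exact pow_div_gcd_eq_one_of_pow_eq_zpow hcop hν hμ hνμ

theorem statement16 (p q n m : ℕ) (hp : p.Prime) (κ : ℕ) (hκ : 0 < κ) (hq : q = p ^ κ)
    (hm : 1 ≤ m) (hmn : m < n)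
    (Fq : Type*) [Field Fq] [Fintype Fq] (hcard : Fintype.card Fq = q)
    (b c : ℤ)
    (hbc : b * (((q ^ (n - m) - 1) / (q - 1) : ℕ) : ℤ)
        - c * (((q ^ m - 1) / (q - 1) : ℕ) : ℤ) = 1)
    -- d := (q-1)/gcd(q-1, b+c)
    (d : ℕ) (hd : d = (q - 1) / Int.gcd (((q - 1 : ℕ)) : ℤ) (b + c))
    (ν μ : Fqˣ) (hνμ : ν ^ n = μ ^ (b + c)) :
    ν ^ d = 1 := by
  subst hd hcard
  have hpow (x : Fqˣ) : x ^ (Fintype.card Fq - 1) = 1 :=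
    Units.ext (FiniteField.pow_card_sub_one_eq_one (x : Fq) x.ne_zero)
  exact statement16_general Fintype.one_lt_card hmn.le hbc (hpow ν) (hpow μ) hνμ
end

section
/- Assume q is odd, n is even and bC − cB = 1. Then d := (q−1)/gcd(q−1, b+c) is even. -/
/-!
For odd `q` every power of `q` is odd, so a geometric sum of `k` powers has the parity of `k`.
As `n` is even, `B` and `C` therefore have the same parity, and `b * C - c * B = 1` forces
`b + c` to be odd. Dividing the even number `q - 1` by its odd divisor `gcd (q - 1, b + c)` then
leaves an even number.
-/

open Finset

section Semiring

variable {R : Type*} [Semiring R]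

lemma even_sum_of_forall_odd_of_even_card {ι : Type*} {s : Finset ι} {f : ι → R}
    (hf : ∀ i ∈ s, Odd (f i)) (hs : Even #s) : Even (∑ i ∈ s, f i) := by
  choose! g hg using hf
  rw [sum_congr rfl hg, sum_add_distrib, ← mul_sum, sum_const, nsmul_one]
  exact (even_two_mul _).add hs.natCast

lemma even_geom_sum_add_geom_sum {q : R} (hq : Odd q) {k m : ℕ} (hkm : Even (k + m)) :
    Even (∑ i ∈ range k, q ^ i + ∑ i ∈ range m, q ^ i) := by
  have hcard : Even #((range k).disjSum (range m)) := by simpa using hkm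
  have hodd : ∀ i ∈ (range k).disjSum (range m), Odd (Sum.elim (q ^ ·) (q ^ ·) i) := by
    rintro (i | i) - <;> exact hq.pow
  simpa [sum_disjSum] using even_sum_of_forall_odd_of_even_card hodd hcard

end Semiring

lemma odd_add_of_even_add_of_odd_mul_sub_mul {x y b c : ℤ} (hxy : Even (x + y))
    (h : Odd (b * x - c * y)) : Odd (b + c) := by
  have hmul : Odd ((b + c) * x) := by
    have hsplit : (b + c) * x = b * x - c * y + c * (x + y) := by ring
    exact hsplit ▸ h.add_even (hxy.mul_left c)
  exact Int.Odd.of_mul_left hmul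

lemma even_ediv_of_odd_of_dvd {a g : ℤ} (ha : Even a) (hg : Odd g) (hga : g ∣ a) :
    Even (a / g) := by
  rw [← Int.ediv_mul_cancel hga, Int.even_mul] at ha
  exact ha.resolve_right (Int.not_even_iff_odd.mpr hg)

lemma odd_gcd_of_odd_right (a : ℤ) {b : ℤ} (hb : Odd b) : Odd (Int.gcd a b) :=
  (Int.natAbs_odd.mpr hb).of_dvd_nat (Int.gcd_dvd_natAbs_right a b)

/- Geometric sums replace the quotients `(q ^ k - 1) / (q - 1)`, which are junk at `q = 1`. -/
theorem statement17_general {q : ℤ} (hq : Odd q) {k m : ℕ} (hkm : Even (k + m)) {b c : ℤ}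
    (hbc : Odd (b * ∑ i ∈ range k, q ^ i - c * ∑ i ∈ range m, q ^ i)) :
    Even ((q - 1) / Int.gcd (q - 1) (b + c)) := by
  have hadd : Odd (b + c) :=
    odd_add_of_even_add_of_odd_mul_sub_mul (even_geom_sum_add_geom_sum hq hkm) hbc
  have hgcd : Odd (Int.gcd (q - 1) (b + c) : ℤ) := (odd_gcd_of_odd_right _ hadd).natCast
  exact even_ediv_of_odd_of_dvd (hq.sub_odd odd_one) hgcd (Int.gcd_dvd_left _ _)

theorem statement17 (p q n m : ℕ) (hp : p.Prime) (κ : ℕ) (hκ : 0 < κ) (hq : q = p ^ κ)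
    (hm : 1 ≤ m) (hmn : m < n)
    (hqodd : Odd q) (hneven : Even n)
    (b c : ℤ)
    (hbc : b * (((q ^ (n - m) - 1) / (q - 1) : ℕ) : ℤ)
        - c * (((q ^ m - 1) / (q - 1) : ℕ) : ℤ) = 1)
    -- d := (q-1)/gcd(q-1, b+c)
    (d : ℕ) (hd : d = (q - 1) / Int.gcd (((q - 1 : ℕ)) : ℤ) (b + c)) :
    Even d := by
  have hq2 : 2 ≤ q := hq ▸ hp.two_le.trans (Nat.le_self_pow hκ.ne' p)
  rw [← Nat.geomSum_eq hq2, ← Nat.geomSum_eq hq2] at hbc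
  have hdiff : Odd (b * ∑ i ∈ range (n - m), (q : ℤ) ^ i - c * ∑ i ∈ range m, (q : ℤ) ^ i) := by
    exact_mod_cast hbc ▸ odd_one
  rw [hd, ← Int.even_coe_nat, Int.natCast_div, Nat.cast_pred (by lia)]
  exact statement17_general hqodd.natCast (by rwa [Nat.sub_add_cancel hmn.le]) hdiff
end
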